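/- Let W be the Wiener measure on Ω and let α ∈ (0,1/2). Then: (i) for every ω̄ ∈ C_α^crit, the local order ord_loc W(ω̄) exists and equals 2(α^{−1} − 1); (ii) the Hausdorff order of C_α^crit equals α^{−1}; (iii) the minimum of underline-ord_loc W(·) over Ω equals 2. -/

import Mathlib

open scoped ENNReal NNReal Topology
open Filter MeasureTheory Metric Set

noncomputable section

namespace Multifractal


/-- The `δ`-level Hausdorff pre-measure `H^h_δ` associated to a gauge `h`. -/
def hMeasAux {X : Type*} [MetricSpace X] (h : ℝ → ℝ) (δ : ℝ≥0∞) (E : Set X) : ℝ≥0∞ :=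
  ⨅ (c : ℕ → X) (r : ℕ → ℝ) (_ : ∀ n, 0 < r n ∧ ENNReal.ofReal (r n) ≤ δ)
    (_ : E ⊆ ⋃ n, Metric.ball (c n) (r n)), ∑' n, ENNReal.ofReal (h (r n))

/-- The `h`-Hausdorff measure. -/
def hMeas {X : Type*} [MetricSpace X] (h : ℝ → ℝ) (E : Set X) : ℝ≥0∞ :=
  ⨆ (δ : ℝ≥0∞) (_ : 0 < δ), hMeasAux h δ E

/-- `Ω`: continuous paths on `[0,1]` vanishing at `0`, with the uniform metric. -/
abbrev PathSpace : Type := {f : C(unitInterval, ℝ) // f 0 = 0}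

instance : MeasurableSpace PathSpace := borel PathSpace
instance : BorelSpace PathSpace := ⟨rfl⟩

/-- `μ` is a centered Gaussian process measure on path space with covariance `K`:
a probability measure under which every finite linear combination of coordinates
is a centered real Gaussian with the variance given by `K`. -/
def IsGaussianProcess (μ : Measure PathSpace) (K : unitInterval → unitInterval → ℝ) : Prop :=
  IsProbabilityMeasure μ ∧
  ∀ (n : ℕ) (t : Fin n → unitInterval) (c : Fin n → ℝ),
    Measure.map (fun ω : PathSpace => ∑ i, c i * ω.1 (t i)) μ =
      ProbabilityTheory.gaussianReal 0
        (Real.toNNReal (∑ i, ∑ j, c i * c j * K (t i) (t j)))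

/-- `W` is the Wiener measure: the coordinate process is centered Gaussian with
covariance `min s t`. -/
def IsWienerMeasure (W : Measure PathSpace) : Prop :=
  IsGaussianProcess W (fun s t => min (s : ℝ) (t : ℝ))

/-- `μ` is the law of fractional Brownian motion with Hurst parameter `H`. -/
def IsFBM (H : ℝ) (μ : Measure PathSpace) : Prop :=
  IsGaussianProcess μ (fun s t =>
    ((s : ℝ) ^ (2*H) + (t : ℝ) ^ (2*H) - |(t : ℝ) - (s : ℝ)| ^ (2*H)) / 2)

/-- Clamping of a real number into the unit interval. -/
def clampI (t : ℝ) : unitInterval :=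
  ⟨min (max t 0) 1, Set.mem_Icc.mpr ⟨le_min (le_max_right _ _) zero_le_one, min_le_right _ _⟩⟩

/-- The grid point `j/n` of the unit interval. -/
def gridPt (n j : ℕ) : unitInterval := clampI ((j : ℝ) / n)

/-- The discrete quadratic variation `Q_n(ω)`. -/
def Qvar (ω : PathSpace) (n : ℕ) : ℝ :=
  Real.sqrt ((1 / (n : ℝ)) *
    ∑ i ∈ Finset.range n, (ω.1 (gridPt n (i+1)) - ω.1 (gridPt n i)) ^ 2)

/-- Lower Orey exponent `q^-(ω)`. -/
def oreyLower (ω : PathSpace) : EReal :=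
  liminf (fun n : ℕ => ((-Real.log (Qvar ω n) / Real.log n : ℝ) : EReal)) atTop

/-- Upper Orey exponent `q^+(ω)`. -/
def oreyUpper (ω : PathSpace) : EReal :=
  limsup (fun n : ℕ => ((-Real.log (Qvar ω n) / Real.log n : ℝ) : EReal)) atTop

/-- The set `C_a` of `a`-Hölder paths. -/
def holderSet (a : ℝ) : Set PathSpace :=
  {ω | ∃ C : ℝ, ∀ x y : unitInterval, |ω.1 x - ω.1 y| ≤ C * |(x : ℝ) - (y : ℝ)| ^ a}

/-- The set `C_a^- = ⋂_{0<b<a} C_b` of nearly `a`-Hölder paths. -/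
def holderMinus (a : ℝ) : Set PathSpace := ⋂ b ∈ Set.Ioo (0:ℝ) a, holderSet b

/-- The set `C_q^crit` of critical `q`-Hölder paths: nearly `q`-Hölder paths whose
Orey exponent exists and equals `q`. -/
def holderCrit (q : ℝ) : Set PathSpace :=
  {ω | ω ∈ holderMinus q ∧ oreyLower ω = (q : EReal) ∧ oreyUpper ω = (q : EReal)}

/-- The set `Ω^crit` of critical Hölder paths. -/
def pathCrit : Set PathSpace := ⋃ q ∈ Set.Ioo (0:ℝ) 1, holderCrit q

/-- The lower local order of a measure `μ` on path space at `ω`. -/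
def lowerLocOrd (μ : Measure PathSpace) (ω : PathSpace) : EReal :=
  liminf (fun ε : ℝ =>
    ((Real.log (-Real.log ((μ (Metric.ball ω ε)).toReal)) / (-Real.log ε) : ℝ) : EReal))
    (𝓝[>] (0:ℝ))

/-- The upper local order of a measure `μ` on path space at `ω`. -/
def upperLocOrd (μ : Measure PathSpace) (ω : PathSpace) : EReal :=
  limsup (fun ε : ℝ =>
    ((Real.log (-Real.log ((μ (Metric.ball ω ε)).toReal)) / (-Real.log ε) : ℝ) : EReal))
    (𝓝[>] (0:ℝ))

/-- The Hausdorff order of a set of paths: `sup {α > 0 : H^{h_α}(A) = ∞}` where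
`h_α(ε) = exp(-ε^{-α})`. -/
def ordH (A : Set PathSpace) : ℝ≥0∞ :=
  ⨆ (α : ℝ) (_ : 0 < α ∧ hMeas (fun ε : ℝ => Real.exp (-(ε ^ (-α)))) A = ∞),
    ENNReal.ofReal α

/-- The level set `E(ξ)` of paths at which the local order of `μ` exists and
equals `ξ`. -/
def levelOrd (μ : Measure PathSpace) (ξ : ℝ) : Set PathSpace :=
  {ω | lowerLocOrd μ ω = (ξ : EReal) ∧ upperLocOrd μ ω = (ξ : EReal)}

/-- The cylinder `C_n(ω̄, ε)` around `ω̄` of depth `n` and radius `ε`. -/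
def cylinder (ωb : PathSpace) (n : ℕ) (ε : ℝ) : Set PathSpace :=
  {ω | ∀ j ∈ Finset.Icc 1 n, |ω.1 (gridPt n j) - ωb.1 (gridPt n j)| ≤ ε}

/-- The affine interpolation `L̄_j` of `ω̄` on `[(j-1)/n, j/n]`, evaluated at `t`. -/
def affInterp (ωb : PathSpace) (n j : ℕ) (t : ℝ) : ℝ :=
  ωb.1 (gridPt n (j-1)) +
    (t - ((j-1 : ℕ) : ℝ) / n) * n * (ωb.1 (gridPt n j) - ωb.1 (gridPt n (j-1)))

/-- The maximal deviation `Δ_n(ω̄)` of `ω̄` from its chords on the `1/n`-grid. -/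
def chordDev (ωb : PathSpace) (n : ℕ) : ℝ :=
  sSup {d : ℝ | ∃ j ∈ Finset.Icc 1 n, ∃ t ∈ Set.Icc (((j-1 : ℕ) : ℝ) / n) ((j : ℝ) / n),
    d = |ωb.1 (clampI t) - affInterp ωb n j t|}


/-! ### Finite-dimensional distributions -/

lemma measurable_eval (t : unitInterval) : Measurable (fun ω : PathSpace => ω.1 t) := by
  have : Continuous (fun ω : PathSpace => ω.1 t) := by fun_prop
  exact this.measurable

/-- Gaussian law of finite linear combinations indexed by an arbitrary finite type. -/
lemma IsGaussianProcess.map_sum {μ : Measure PathSpace} {K : unitInterval → unitInterval → ℝ}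
    (h : IsGaussianProcess μ K) {κ : Type*} [Fintype κ] (t : κ → unitInterval) (c : κ → ℝ) :
    Measure.map (fun ω : PathSpace => ∑ i, c i * ω.1 (t i)) μ =
      ProbabilityTheory.gaussianReal 0
        (Real.toNNReal (∑ i, ∑ j, c i * c j * K (t i) (t j))) := by
  let e := Fintype.equivFin κ
  have := h.2 (Fintype.card κ) (t ∘ e.symm) (c ∘ e.symm)
  simp only [Function.comp] at this
  have e1 : ∀ f : κ → ℝ, ∑ i, f (e.symm i) = ∑ i, f i := fun f => Equiv.sum_comp e.symm f
  have e2 : (∑ i, ∑ j, c (e.symm i) * c (e.symm j) * K (t (e.symm i)) (t (e.symm j)))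
      = ∑ i, ∑ j, c i * c j * K (t i) (t j) := by
    rw [e1 (fun i => ∑ j, c i * c (e.symm j) * K (t i) (t (e.symm j)))]
    refine Finset.sum_congr rfl fun i _ => ?_
    rw [e1 (fun j => c i * c j * K (t i) (t j))]
  rw [e2] at this
  rw [← this]
  congr 1
  ext ω
  exact (e1 (fun i => c i * ω.1 (t i))).symm

/-- Jointly Gaussian, pairwise uncorrelated linear functionals have a product law. -/
lemma IsGaussianProcess.measure_forall_mem {μ : Measure PathSpace}
    {K : unitInterval → unitInterval → ℝ}
    (h : IsGaussianProcess μ K) {ι κ : Type*} [Fintype ι] [DecidableEq ι] [Fintype κ]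
    (t : ι → κ → unitInterval) (c : ι → κ → ℝ) (v : ι → ℝ≥0)
    (hcov : ∀ i j, ∑ a, ∑ b, c i a * c j b * K (t i a) (t j b) = if i = j then (v i : ℝ) else 0)
    (A : ι → Set ℝ) (hA : ∀ i, MeasurableSet (A i)) :
    μ {ω | ∀ i, ∑ a, c i a * ω.1 (t i a) ∈ A i} =
      ∏ i, ProbabilityTheory.gaussianReal 0 (v i) (A i) := by
  have := h.1
  set X : ι → PathSpace → ℝ := fun i ω => ∑ a, c i a * ω.1 (t i a) with hX
  have hXm : ∀ i, Measurable (X i) := fun i =>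
    Finset.measurable_sum _ fun a _ => (measurable_eval _).const_mul _
  have hlaw : ∀ i, μ.map (X i) = ProbabilityTheory.gaussianReal 0 (v i) := by
    intro i
    have := h.map_sum (t i) (c i)
    rw [hcov i i, if_pos rfl, Real.toNNReal_coe] at this
    exact this
  have hind : ProbabilityTheory.iIndepFun X μ := by
    rw [ProbabilityTheory.iIndepFun_iff_charFunDual_pi fun i => (hXm i).aemeasurable]
    intro L
    have hvec : Measurable (fun ω => (fun i => X i ω)) := measurable_pi_lambda _ hXm
    set l : ι → ℝ := fun i => L (Pi.single i 1) with hl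
    have hLx : ∀ x : ι → ℝ, L x = ∑ i, l i * x i := by
      intro x
      have : x = ∑ i, x i • (Pi.single i (1 : ℝ) : ι → ℝ) := by
        ext j
        simp [Finset.sum_apply, Pi.single_apply]
      conv_lhs => rw [this]
      simp [hl, mul_comm]
    rw [charFunDual_eq_charFun_map_one, Measure.map_map (by fun_prop) hvec]
    have key : μ.map (L ∘ fun ω i => X i ω) =
        ProbabilityTheory.gaussianReal 0 (Real.toNNReal (∑ i, l i ^ 2 * v i)) := by
      have := h.map_sum (κ := ι × κ) (fun p => t p.1 p.2) (fun p => l p.1 * c p.1 p.2)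
      have e : (∑ p : ι × κ, ∑ q : ι × κ, l p.1 * c p.1 p.2 * (l q.1 * c q.1 q.2) *
          K (t p.1 p.2) (t q.1 q.2)) = ∑ i, l i ^ 2 * v i := by
        rw [Fintype.sum_prod_type]
        refine Finset.sum_congr rfl fun i _ => ?_
        have : ∀ a, (∑ q : ι × κ, l i * c i a * (l q.1 * c q.1 q.2) * K (t i a) (t q.1 q.2))
            = ∑ j, l i * l j * ∑ b, c i a * c j b * K (t i a) (t j b) := by
          intro a
          rw [Fintype.sum_prod_type]
          refine Finset.sum_congr rfl fun j _ => ?_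
          rw [Finset.mul_sum]
          refine Finset.sum_congr rfl fun b _ => by ring
        simp_rw [this]
        rw [Finset.sum_comm]
        simp_rw [← Finset.mul_sum, hcov]
        simp [pow_two]
      rw [e] at this
      rw [← this]
      congr 1
      ext ω
      simp only [Function.comp, hLx, hX, Fintype.sum_prod_type, Finset.mul_sum, mul_assoc]
    rw [key]
    have hone : ∀ i, charFunDual (μ.map (X i)) (L.comp (.single ℝ (fun _ => ℝ) i)) =
        Complex.exp (-(l i ^ 2 * v i : ℝ) / 2) := by
      intro i
      rw [charFunDual_eq_charFun_map_one, hlaw]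
      have : ⇑(L.comp (.single ℝ (fun _ => ℝ) i)) = fun x => l i * x := by
        ext x
        simp only [ContinuousLinearMap.comp_apply, ContinuousLinearMap.single_apply, hLx]
        rw [Finset.sum_eq_single i] <;> simp +contextual
      rw [this, ProbabilityTheory.gaussianReal_map_const_mul,
        ProbabilityTheory.charFun_gaussianReal]
      congr 1
      push_cast
      simp [neg_div]
    simp_rw [hone]
    rw [ProbabilityTheory.charFun_gaussianReal, ← Complex.exp_sum]
    congr 1
    rw [Real.coe_toNNReal _ (Finset.sum_nonneg fun i _ => by positivity)]
    push_cast
    simp [Finset.sum_neg_distrib, Finset.sum_div, neg_div]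
  have := hind.measure_inter_preimage_eq_mul Finset.univ (sets := A) (fun i _ => hA i)
  have e : {ω | ∀ i, X i ω ∈ A i} = ⋂ i ∈ Finset.univ, X i ⁻¹' A i := by
    ext ω; simp
  change μ {ω | ∀ i, X i ω ∈ A i} = _
  rw [e, this]
  refine Finset.prod_congr rfl fun i _ => ?_
  rw [← hlaw i, Measure.map_apply (hXm i) (hA i)]

/-! ### Dyadic second differences -/

lemma coe_clampI {t : ℝ} (h0 : 0 ≤ t) (h1 : t ≤ 1) : (clampI t : ℝ) = t := by
  simp [clampI, h0, h1]

lemma coe_gridPt {n j : ℕ} (h : j ≤ n) : (gridPt n j : ℝ) = (j : ℝ) / n := by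
  refine coe_clampI (by positivity) ?_
  exact div_le_one_of_le₀ (by exact_mod_cast h) (by positivity)

lemma gridPt_two_mul (j k : ℕ) : gridPt (2 ^ (j + 1)) (2 * k) = gridPt (2 ^ j) k := by
  unfold gridPt
  congr 1
  push_cast
  rw [pow_succ]
  field_simp

/-- The second difference of `f` on the `k`-th dyadic interval of generation `j`. -/
def secDiff (f : unitInterval → ℝ) (j k : ℕ) : ℝ :=
  f (gridPt (2 ^ (j + 1)) (2 * k + 1)) -
    (f (gridPt (2 ^ j) k) + f (gridPt (2 ^ j) (k + 1))) / 2

/-- Indices of the Faber-Schauder coefficients of a path: `none` stands for the terminal value,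
`some (j, k)` for the `k`-th second difference of generation `j`. -/
abbrev CoefIdx : Type := Option (ℕ × ℕ)

/-- The Faber-Schauder coefficients of a path. -/
def coef (ω : PathSpace) : CoefIdx → ℝ
  | none => ω.1 1
  | some (j, k) => secDiff ω.1 j k

/-- The variance of a coefficient under the Wiener measure. -/
def coefVar : CoefIdx → ℝ≥0
  | none => 1
  | some (j, _) => (2 ^ j)⁻¹ / 4

/-- The indices that correspond to an actual dyadic interval of `[0,1]`. -/
def CoefIdx.Valid : CoefIdx → Prop
  | none => True
  | some (j, k) => k < 2 ^ j

/-- The three points at which a coefficient evaluates the path. -/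
def coefPt : CoefIdx → Fin 3 → unitInterval
  | none => ![1, 0, 0]
  | some (j, k) => ![gridPt (2 ^ (j + 1)) (2 * k + 1), gridPt (2 ^ j) k, gridPt (2 ^ j) (k + 1)]

/-- The three weights of a coefficient. -/
def coefWt : CoefIdx → Fin 3 → ℝ
  | none => ![1, 0, 0]
  | some _ => ![1, -1 / 2, -1 / 2]

lemma coef_eq_sum (ω : PathSpace) (o : CoefIdx) :
    coef ω o = ∑ a, coefWt o a * ω.1 (coefPt o a) := by
  rcases o with _ | ⟨j, k⟩
  · simp [coef, coefWt, coefPt, Fin.sum_univ_three]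
  · simp [coef, coefWt, coefPt, Fin.sum_univ_three, secDiff]
    ring

/-- A second difference is uncorrelated with the value of the path outside the interval. -/
lemma sum_coefWt_mul_min (j k : ℕ) (hk : k < 2 ^ j) (s : unitInterval)
    (hs : (s : ℝ) ≤ (k : ℝ) / 2 ^ j ∨ ((k : ℝ) + 1) / 2 ^ j ≤ s) :
    ∑ a, coefWt (some (j, k)) a * min (coefPt (some (j, k)) a : ℝ) (s : ℝ) = 0 := by
  have hp : (0 : ℝ) < 2 ^ j := by positivity
  have e1 : (gridPt (2 ^ (j + 1)) (2 * k + 1) : ℝ) = (k + 1 / 2) / 2 ^ j := by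
    rw [coe_gridPt (by rw [pow_succ]; omega)]
    push_cast
    rw [pow_succ]
    field_simp
  have e2 : (gridPt (2 ^ j) k : ℝ) = k / 2 ^ j := by
    rw [coe_gridPt hk.le]; push_cast; rfl
  have e3 : (gridPt (2 ^ j) (k + 1) : ℝ) = (k + 1) / 2 ^ j := by
    rw [coe_gridPt hk]; push_cast; rfl
  simp only [coefWt, coefPt, Fin.sum_univ_three]
  simp only [Matrix.cons_val_zero, Matrix.cons_val_one, Matrix.cons_val]
  rw [e1, e2, e3]
  have h12 : (k : ℝ) / 2 ^ j ≤ (k + 1 / 2) / 2 ^ j := by gcongr; linarith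
  have h23 : ((k : ℝ) + 1 / 2) / 2 ^ j ≤ (k + 1) / 2 ^ j := by gcongr; linarith
  rcases hs with hs | hs
  · rw [min_eq_right (hs.trans h12), min_eq_right hs, min_eq_right (hs.trans (h12.trans h23))]
    ring
  · rw [min_eq_left (h23.trans hs), min_eq_left hs, min_eq_left ((h12.trans h23).trans hs)]
    ring

lemma coefPt_outside_none (j k : ℕ) (hk : k < 2 ^ j) (b : Fin 3) :
    (coefPt none b : ℝ) ≤ (k : ℝ) / 2 ^ j ∨ ((k : ℝ) + 1) / 2 ^ j ≤ coefPt none b := by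
  have h1 : ((k : ℝ) + 1) / 2 ^ j ≤ 1 := by
    rw [div_le_one (by positivity)]; exact_mod_cast hk
  have h0 : 0 ≤ (k : ℝ) / 2 ^ j := by positivity
  fin_cases b <;> simp [coefPt, h1, h0]

/-- Points of a generation-`(i+1)` grid lie outside the dyadic intervals of a later generation. -/
lemma gridPt_outside {i j : ℕ} (hij : i ≤ j) (k l : ℕ) (hl : l ≤ 2 ^ i) :
    (gridPt (2 ^ i) l : ℝ) ≤ (k : ℝ) / 2 ^ j ∨ ((k : ℝ) + 1) / 2 ^ j ≤ gridPt (2 ^ i) l := by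
  rw [coe_gridPt hl]
  obtain ⟨m, rfl⟩ := Nat.exists_eq_add_of_le hij
  have : (l : ℝ) / ((2 ^ i : ℕ) : ℝ) = ((l * 2 ^ m : ℕ) : ℝ) / 2 ^ (i + m) := by
    push_cast; rw [pow_add]; field_simp
  rw [this]
  rcases le_or_gt (l * 2 ^ m) k with h | h
  · left; gcongr
  · right
    gcongr
    exact_mod_cast h

lemma coefPt_outside {i j k l : ℕ} (hl : l < 2 ^ i) (hij : i ≤ j)
    (hne : (i, l) ≠ (j, k)) (b : Fin 3) :
    (coefPt (some (i, l)) b : ℝ) ≤ (k : ℝ) / 2 ^ j ∨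
      ((k : ℝ) + 1) / 2 ^ j ≤ coefPt (some (i, l)) b := by
  fin_cases b
  · rcases hij.lt_or_eq with h | rfl
    · exact gridPt_outside (i := i + 1) h k (2 * l + 1) (by rw [pow_succ]; omega)
    · simp only [coefPt, Fin.zero_eta, Matrix.cons_val_zero]
      rw [coe_gridPt (by rw [pow_succ]; omega)]
      have : ((2 * l + 1 : ℕ) : ℝ) / ((2 ^ (i + 1) : ℕ) : ℝ) = (l + 1 / 2) / 2 ^ i := by
        push_cast; rw [pow_succ]; field_simp
      rw [this]
      have hlk : l ≠ k := fun h => hne (by rw [h])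
      rcases Nat.lt_or_gt_of_ne hlk with h | h
      · left
        gcongr
        have : (l : ℝ) + 1 ≤ k := by exact_mod_cast h
        linarith
      · right
        refine div_le_div_of_nonneg_right ?_ (by positivity)
        have : (k : ℝ) + 1 ≤ l := by exact_mod_cast h
        linarith
  · exact gridPt_outside hij k l hl.le
  · exact gridPt_outside hij k (l + 1) hl

lemma sum_coefWt_eq_zero_aux (j k : ℕ) (hk : k < 2 ^ j) (o : CoefIdx)
    (h : ∀ b, (coefPt o b : ℝ) ≤ (k : ℝ) / 2 ^ j ∨ ((k : ℝ) + 1) / 2 ^ j ≤ coefPt o b) :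
    ∑ a, ∑ b, coefWt (some (j, k)) a * coefWt o b *
      min (coefPt (some (j, k)) a : ℝ) (coefPt o b : ℝ) = 0 := by
  rw [Finset.sum_comm]
  refine Finset.sum_eq_zero fun b _ => ?_
  have := sum_coefWt_mul_min j k hk (coefPt o b) (h b)
  calc _ = coefWt o b * ∑ a, coefWt (some (j, k)) a *
        min (coefPt (some (j, k)) a : ℝ) (coefPt o b : ℝ) := by
        rw [Finset.mul_sum]; exact Finset.sum_congr rfl fun a _ => by ring
    _ = 0 := by rw [this, mul_zero]

lemma sum_coefWt_swap (o p : CoefIdx) :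
    ∑ a, ∑ b, coefWt o a * coefWt p b * min (coefPt o a : ℝ) (coefPt p b : ℝ) =
    ∑ a, ∑ b, coefWt p a * coefWt o b * min (coefPt p a : ℝ) (coefPt o b : ℝ) := by
  rw [Finset.sum_comm]
  refine Finset.sum_congr rfl fun a _ => Finset.sum_congr rfl fun b _ => ?_
  rw [min_comm]; ring

lemma coef_cov (o p : CoefIdx) (ho : o.Valid) (hp : p.Valid) :
    ∑ a, ∑ b, coefWt o a * coefWt p b * min (coefPt o a : ℝ) (coefPt p b : ℝ) =
      if o = p then (coefVar o : ℝ) else 0 := by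
  split_ifs with h
  · subst h
    rcases o with _ | ⟨j, k⟩
    · simp [coefWt, coefPt, coefVar, Fin.sum_univ_three]
    · have hk : k < 2 ^ j := ho
      have hpos : (0 : ℝ) < 2 ^ j := by positivity
      have e1 : (gridPt (2 ^ (j + 1)) (2 * k + 1) : ℝ) = (k + 1 / 2) / 2 ^ j := by
        rw [coe_gridPt (by rw [pow_succ]; omega)]
        push_cast
        rw [pow_succ]
        field_simp
      have e2 : (gridPt (2 ^ j) k : ℝ) = k / 2 ^ j := by
        rw [coe_gridPt hk.le]; push_cast; rfl
      have e3 : (gridPt (2 ^ j) (k + 1) : ℝ) = (k + 1) / 2 ^ j := by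
        rw [coe_gridPt hk]; push_cast; rfl
      have h12 : (k : ℝ) / 2 ^ j ≤ (k + 1 / 2) / 2 ^ j := by gcongr; linarith
      have h23 : ((k : ℝ) + 1 / 2) / 2 ^ j ≤ (k + 1) / 2 ^ j := by gcongr; linarith
      simp only [coefWt, coefPt, Fin.sum_univ_three, coefVar]
      simp only [Matrix.cons_val_zero, Matrix.cons_val_one, Matrix.cons_val]
      rw [e1, e2, e3]
      simp only [min_self, min_eq_left h12, min_eq_right h12, min_eq_left h23, min_eq_right h23,
        min_eq_left (h12.trans h23), min_eq_right (h12.trans h23)]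
      push_cast
      field_simp
      ring
  · rcases o with _ | ⟨i, l⟩
    · rcases p with _ | ⟨j, k⟩
      · exact absurd rfl h
      · rw [sum_coefWt_swap]
        exact sum_coefWt_eq_zero_aux j k hp none fun b => coefPt_outside_none j k hp b
    · rcases p with _ | ⟨j, k⟩
      · exact sum_coefWt_eq_zero_aux i l ho none fun b => coefPt_outside_none i l ho b
      · have hne : (i, l) ≠ (j, k) := fun e => h (by rw [e])
        rcases le_total i j with hij | hij
        · rw [sum_coefWt_swap]
          exact sum_coefWt_eq_zero_aux j k hp _ fun b => coefPt_outside ho hij hne b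
        · exact sum_coefWt_eq_zero_aux i l ho _ fun b => coefPt_outside hp hij hne.symm b

/-- Under the Wiener measure the Faber-Schauder coefficients are independent Gaussians. -/
lemma IsWienerMeasure.measure_coef {W : Measure PathSpace} (hW : IsWienerMeasure W)
    (S : Finset CoefIdx) (hS : ∀ o ∈ S, o.Valid) (A : CoefIdx → Set ℝ)
    (hA : ∀ o, MeasurableSet (A o)) :
    W {ω | ∀ o ∈ S, coef ω o ∈ A o} =
      ∏ o ∈ S, ProbabilityTheory.gaussianReal 0 (coefVar o) (A o) := by
  have := IsGaussianProcess.measure_forall_mem hW (ι := S) (κ := Fin 3)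
    (fun o => coefPt o) (fun o => coefWt o) (fun o => coefVar o)
    (by
      intro o p
      rw [coef_cov _ _ (hS _ o.2) (hS _ p.2)]
      simp only [Subtype.ext_iff])
    (fun o => A o) (fun o => hA o)
  rw [Finset.prod_coe_sort S (fun o => ProbabilityTheory.gaussianReal 0 (coefVar o) (A o))] at this
  rw [← this]
  congr 1
  ext ω
  simp [coef_eq_sum]

/-! ### One-dimensional Gaussian estimates -/

lemma gaussianReal_hasSubgaussianMGF (v : ℝ≥0) :
    ProbabilityTheory.HasSubgaussianMGF id v (ProbabilityTheory.gaussianReal 0 v) where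
  integrable_exp_mul t := by
    simpa using ProbabilityTheory.integrable_exp_mul_gaussianReal (μ := 0) (v := v) t
  mgf_le t := by simp [ProbabilityTheory.mgf_id_gaussianReal]

lemma gaussianReal_Ici_le (v : ℝ≥0) {a : ℝ} (ha : 0 ≤ a) :
    ProbabilityTheory.gaussianReal 0 v (Ici a) ≤ ENNReal.ofReal (Real.exp (-a ^ 2 / (2 * v))) := by
  have h := (gaussianReal_hasSubgaussianMGF v).measure_ge_le ha
  rw [← ENNReal.ofReal_toReal (measure_ne_top (ProbabilityTheory.gaussianReal 0 v) (Ici a))]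
  exact ENNReal.ofReal_le_ofReal h

lemma gaussianReal_Iic_le (v : ℝ≥0) {a : ℝ} (ha : 0 ≤ a) :
    ProbabilityTheory.gaussianReal 0 v (Iic (-a)) ≤
      ENNReal.ofReal (Real.exp (-a ^ 2 / (2 * v))) := by
  have h := (gaussianReal_hasSubgaussianMGF v).neg.measure_ge_le ha
  rw [← ENNReal.ofReal_toReal (measure_ne_top (ProbabilityTheory.gaussianReal 0 v) (Iic (-a)))]
  refine ENNReal.ofReal_le_ofReal (le_trans (le_of_eq ?_) h)
  rw [measureReal_def]
  congr 2
  ext x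
  simp [le_neg]

lemma gaussianReal_compl_Icc_le (v : ℝ≥0) {a : ℝ} (ha : 0 ≤ a) :
    ProbabilityTheory.gaussianReal 0 v (Icc (-a) a)ᶜ ≤
      ENNReal.ofReal (2 * Real.exp (-a ^ 2 / (2 * v))) := by
  have hsub : (Icc (-a) a)ᶜ ⊆ Iic (-a) ∪ Ici a := by
    intro x hx
    by_contra h
    simp only [mem_union, mem_Iic, mem_Ici, not_or, not_le] at h
    exact hx ⟨h.1.le, h.2.le⟩
  refine (measure_mono hsub).trans ((measure_union_le _ _).trans ?_)
  rw [two_mul, ENNReal.ofReal_add (by positivity) (by positivity)]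
  exact add_le_add (gaussianReal_Iic_le v ha) (gaussianReal_Ici_le v ha)

lemma gaussianReal_Icc_le {v : ℝ≥0} (hv : v ≠ 0) (z a : ℝ) :
    ProbabilityTheory.gaussianReal 0 v (Icc (z - a) (z + a)) ≤
      ENNReal.ofReal (2 * a * (√(2 * Real.pi * v))⁻¹) := by
  rw [ProbabilityTheory.gaussianReal_apply _ hv]
  calc _ ≤ ∫⁻ _ in Icc (z - a) (z + a), ENNReal.ofReal (√(2 * Real.pi * v))⁻¹ := by
        refine lintegral_mono fun x => ENNReal.ofReal_le_ofReal ?_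
        rw [ProbabilityTheory.gaussianPDFReal]
        refine mul_le_of_le_one_right (by positivity) (Real.exp_le_one_iff.2 ?_)
        rw [neg_div]
        have : 0 ≤ (x - 0) ^ 2 / (2 * (v : ℝ)) := by positivity
        linarith
    _ = _ := by
        rw [setLIntegral_const, Real.volume_Icc, mul_comm, ← ENNReal.ofReal_mul' (by positivity)]
        congr 1
        ring

lemma le_gaussianReal_Icc {v : ℝ≥0} (hv : v ≠ 0) (z : ℝ) {a : ℝ} (ha : 0 ≤ a) :
    ENNReal.ofReal (2 * a * ((√(2 * Real.pi * v))⁻¹ * Real.exp (-(z ^ 2 + a ^ 2) / v))) ≤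
      ProbabilityTheory.gaussianReal 0 v (Icc (z - a) (z + a)) := by
  rw [ProbabilityTheory.gaussianReal_apply _ hv]
  have hv' : (0 : ℝ) < v := by positivity
  calc _ = ∫⁻ _ in Icc (z - a) (z + a),
        ENNReal.ofReal ((√(2 * Real.pi * v))⁻¹ * Real.exp (-(z ^ 2 + a ^ 2) / v)) := by
        rw [setLIntegral_const, Real.volume_Icc, mul_comm, ← ENNReal.ofReal_mul' (by linarith)]
        congr 1
        ring
    _ ≤ _ := by
        refine setLIntegral_mono' measurableSet_Icc fun x hx => ENNReal.ofReal_le_ofReal ?_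
        rw [ProbabilityTheory.gaussianPDFReal]
        refine mul_le_mul_of_nonneg_left (Real.exp_le_exp.2 ?_) (by positivity)
        rw [div_le_div_iff₀ hv' (by positivity)]
        have h1 : |x - z| ≤ a := abs_le.2 ⟨by linarith [hx.1], by linarith [hx.2]⟩
        have h2 : (x - z) ^ 2 ≤ a ^ 2 := sq_le_sq' (by linarith [hx.1]) (by linarith [hx.2])
        have h3 : x ^ 2 ≤ 2 * (z ^ 2 + a ^ 2) := by nlinarith [sq_nonneg (x - 2 * z)]
        nlinarith

lemma gaussianReal_Ici_zero {v : ℝ≥0} (hv : v ≠ 0) :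
    ProbabilityTheory.gaussianReal 0 v (Ici 0) = 1 / 2 ∧
    ProbabilityTheory.gaussianReal 0 v (Iio 0) = 1 / 2 := by
  set μ := ProbabilityTheory.gaussianReal 0 v with hμ
  have := ProbabilityTheory.nullSingletonClass_gaussianReal (μ := 0) hv
  have hsymm : μ (Iio 0) = μ (Ioi 0) := by
    have h : μ.map (fun x => -x) = μ := by
      rw [hμ, ProbabilityTheory.gaussianReal_map_neg, neg_zero]
    conv_lhs => rw [← h]
    rw [Measure.map_apply (by fun_prop) measurableSet_Iio]
    congr 1
    ext x
    simp
  have hIci : μ (Ici 0) = μ (Ioi 0) := (measure_congr Ioi_ae_eq_Ici).symm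
  have hsum : μ (Iio 0) + μ (Ici 0) = 1 := by
    have hd : Disjoint (Iio (0 : ℝ)) (Ici 0) := disjoint_left.2 fun x hx hx' => absurd (mem_Ici.1 hx') (not_le.2 (mem_Iio.1 hx))
    rw [← measure_union hd measurableSet_Ici, Iio_union_Ici, measure_univ]
  have h2 : 2 * μ (Ici 0) = 1 := by rw [two_mul]; nth_rw 1 [hIci]; rw [← hsymm, hsum]
  have hh : μ (Ici 0) = 1 / 2 := by
    rw [ENNReal.eq_div_iff (by simp) (by simp)]; exact h2
  exact ⟨hh, by rw [hsymm, ← hIci, hh]⟩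

/-! ### Uniform control by the Faber-Schauder coefficients -/

lemma abs_sub_le_of_secDiff_le (f : unitInterval → ℝ) (J q : ℕ) (hq : q < 2 ^ J) (c δ : ℝ)
    (hl : |f (gridPt (2 ^ J) q) - c| ≤ δ) (hr : |f (gridPt (2 ^ J) (q + 1)) - c| ≤ δ)
    (a : ℕ → ℝ) (ha : ∀ j, 0 ≤ a j) (m : ℕ)
    (hd : ∀ j, J ≤ j → j < J + m → ∀ k < 2 ^ j, |secDiff f j k| ≤ a j) (i : ℕ)
    (hi : q * 2 ^ m ≤ i) (hi' : i ≤ (q + 1) * 2 ^ m) :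
    |f (gridPt (2 ^ (J + m)) i) - c| ≤ δ + ∑ s ∈ Finset.range m, a (J + s) := by
  induction m generalizing i with
  | zero =>
    simp only [pow_zero, mul_one] at hi hi'
    have : i = q ∨ i = q + 1 := by omega
    rcases this with rfl | rfl <;> simpa
  | succ m ih =>
    have ih' := ih (fun j h1 h2 => hd j h1 (by omega))
    rw [Finset.sum_range_succ, ← add_assoc J m 1]
    have hpow : (2 : ℕ) ^ (m + 1) = 2 * 2 ^ m := by ring
    rw [hpow] at hi hi'
    have hm0 := ha (J + m)
    rcases Nat.even_or_odd' i with ⟨k, rfl | rfl⟩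
    · rw [gridPt_two_mul]
      have := ih' k (by nlinarith) (by nlinarith)
      linarith
    · have hk1 : q * 2 ^ m ≤ k := by
        have : q * (2 * 2 ^ m) = 2 * (q * 2 ^ m) := by ring
        omega
      have hk2 : k + 1 ≤ (q + 1) * 2 ^ m := by
        have : (q + 1) * (2 * 2 ^ m) = 2 * ((q + 1) * 2 ^ m) := by ring
        omega
      have h1 := ih' k hk1 (by omega)
      have h2 := ih' (k + 1) (by omega) hk2
      have hklt : k < 2 ^ (J + m) := by
        have : (q + 1) * 2 ^ m ≤ 2 ^ J * 2 ^ m := Nat.mul_le_mul_right _ hq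
        rw [pow_add]; omega
      have h3 := hd (J + m) (by omega) (by omega) k hklt
      unfold secDiff at h3
      rw [abs_le] at *
      constructor <;> linarith [h1.1, h1.2, h2.1, h2.2, h3.1, h3.2]

/-- The dyadic cell of generation `J` that contains `t`. -/
lemma exists_dyadic_cell (J : ℕ) (t : unitInterval) :
    ∃ q : ℕ, q < 2 ^ J ∧ (q : ℝ) ≤ t * 2 ^ J ∧ (t : ℝ) * 2 ^ J ≤ q + 1 := by
  have ht0 := t.2.1
  have ht1 := t.2.2
  have hp : (0 : ℝ) < 2 ^ J := by positivity
  rcases ht1.lt_or_eq with h | h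
  · refine ⟨⌊(t : ℝ) * 2 ^ J⌋₊, ?_, Nat.floor_le (by positivity), (Nat.lt_floor_add_one _).le⟩
    rw [Nat.floor_lt (by positivity)]
    push_cast
    nlinarith
  · refine ⟨2 ^ J - 1, Nat.sub_lt (by positivity) one_pos, ?_, ?_⟩
    · rw [h, Nat.cast_sub Nat.one_le_two_pow]; push_cast; linarith
    · rw [h, Nat.cast_sub Nat.one_le_two_pow]; push_cast; linarith

lemma abs_sub_le_of_secDiff_le' (ω : PathSpace) (J : ℕ) (t : unitInterval) (c δ S : ℝ)
    (hcell : ∀ s : unitInterval, |(s : ℝ) - t| ≤ (2 ^ J)⁻¹ → (∃ q ≤ 2 ^ J, s = gridPt (2 ^ J) q) →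
      |ω.1 s - c| ≤ δ)
    (a : ℕ → ℝ) (ha : ∀ j, 0 ≤ a j) (hS : ∀ m, ∑ s ∈ Finset.range m, a (J + s) ≤ S)
    (hd : ∀ j, J ≤ j → ∀ k < 2 ^ j, |secDiff ω.1 j k| ≤ a j) :
    |ω.1 t - c| ≤ δ + S := by
  obtain ⟨q, hq, hq1, hq2⟩ := exists_dyadic_cell J t
  have hp : (0 : ℝ) < 2 ^ J := by positivity
  have hnear : ∀ r : ℕ, r ≤ 2 ^ J → |(r : ℝ) - t * 2 ^ J| ≤ 1 →
      |ω.1 (gridPt (2 ^ J) r) - c| ≤ δ := by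
    intro r hr h
    refine hcell _ ?_ ⟨r, hr, rfl⟩
    rw [coe_gridPt hr]
    push_cast
    have : (r : ℝ) / 2 ^ J - t = (r - t * 2 ^ J) * (2 ^ J)⁻¹ := by field_simp
    rw [this, abs_mul, abs_of_pos (inv_pos.2 hp)]
    exact mul_le_of_le_one_left (by positivity) h
  have hl := hnear q hq.le (abs_le.2 ⟨by linarith, by linarith⟩)
  have hr := hnear (q + 1) hq (by push_cast; exact abs_le.2 ⟨by linarith, by linarith⟩)
  have ht0 := t.2.1
  have key : ∀ m : ℕ, ∃ s : unitInterval, |(s : ℝ) - t| ≤ (1 / 2) ^ m ∧ |ω.1 s - c| ≤ δ + S := by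
    intro m
    have hpm : (0 : ℝ) < 2 ^ (J + m) := by positivity
    have hpm' : (0 : ℝ) < 2 ^ m := by positivity
    set i := max (q * 2 ^ m) ⌊(t : ℝ) * 2 ^ (J + m)⌋₊ with hi
    have hfl := Nat.floor_le (show 0 ≤ (t : ℝ) * 2 ^ (J + m) by positivity)
    have hfl' := Nat.lt_floor_add_one ((t : ℝ) * 2 ^ (J + m))
    have hi1 : q * 2 ^ m ≤ i := le_max_left _ _
    have hi2 : (i : ℝ) ≤ t * 2 ^ (J + m) := by
      rw [hi, Nat.cast_max]
      refine max_le ?_ hfl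
      push_cast
      rw [pow_add, ← mul_assoc]
      gcongr
    have hi3 : (i : ℝ) ≤ ((q + 1) * 2 ^ m : ℕ) := by
      refine hi2.trans ?_
      push_cast
      rw [pow_add, ← mul_assoc]
      gcongr
    have hi4 : i ≤ (q + 1) * 2 ^ m := by exact_mod_cast hi3
    have hi5 : i ≤ 2 ^ (J + m) := hi4.trans (by
      rw [pow_add]; exact Nat.mul_le_mul_right _ hq)
    have hi6 : (t : ℝ) * 2 ^ (J + m) - 1 ≤ i := by
      have : ((⌊(t : ℝ) * 2 ^ (J + m)⌋₊ : ℕ) : ℝ) ≤ i := Nat.cast_le.2 (le_max_right _ _)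
      linarith
    refine ⟨gridPt (2 ^ (J + m)) i, ?_, ?_⟩
    · rw [coe_gridPt hi5]
      push_cast
      have : (i : ℝ) / 2 ^ (J + m) - t = (i - t * 2 ^ (J + m)) * (2 ^ (J + m))⁻¹ := by
        field_simp
      rw [this, abs_mul, abs_of_pos (inv_pos.2 hpm)]
      have h1 : |(i : ℝ) - t * 2 ^ (J + m)| ≤ 1 := abs_le.2 ⟨by linarith, by linarith⟩
      have h2 : ((2 : ℝ) ^ (J + m))⁻¹ ≤ (1 / 2) ^ m := by
        rw [one_div, inv_pow]
        gcongr
        · norm_num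
        · omega
      calc _ ≤ 1 * (1 / 2 : ℝ) ^ m := by gcongr
        _ = _ := one_mul _
    · have := abs_sub_le_of_secDiff_le ω.1 J q hq c δ hl hr a ha m
        (fun j h1 _ => hd j h1) i hi1 hi4
      linarith [hS m]
  choose s hs1 hs2 using key
  have hlim : Tendsto s atTop (𝓝 t) := by
    rw [tendsto_iff_dist_tendsto_zero]
    refine squeeze_zero (fun _ => dist_nonneg) (fun m => ?_)
      (tendsto_pow_atTop_nhds_zero_of_lt_one (r := (1 / 2 : ℝ)) (by norm_num) (by norm_num))
    rw [Subtype.dist_eq, Real.dist_eq]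
    exact hs1 m
  have hlim2 : Tendsto (fun m => |ω.1 (s m) - c|) atTop (𝓝 |ω.1 t - c|) := by
    have hc : Continuous (fun x => |ω.1 x - c|) := by fun_prop
    exact (hc.tendsto t).comp hlim
  exact le_of_tendsto' hlim2 hs2

lemma gridPt_one_zero : gridPt 1 0 = 0 := by
  apply Subtype.ext; simp [gridPt, clampI]

lemma gridPt_one_one : gridPt 1 1 = 1 := by
  apply Subtype.ext; simp [gridPt, clampI]

lemma abs_sub_le_of_coef (ω ωb : PathSpace) (J : ℕ) (b η S : ℝ) (hb : 0 ≤ b)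
    (a : ℕ → ℝ) (ha : ∀ j, 0 ≤ a j) (hS : ∀ m, ∑ s ∈ Finset.range m, a (J + s) ≤ S)
    (hosc : ∀ x y : unitInterval, |(x : ℝ) - y| ≤ (2 ^ J)⁻¹ → |ωb.1 x - ωb.1 y| ≤ η)
    (h1 : |ω.1 1 - ωb.1 1| ≤ b)
    (hlow : ∀ j < J, ∀ k < 2 ^ j, |secDiff ω.1 j k - secDiff ωb.1 j k| ≤ b)
    (hhigh : ∀ j, J ≤ j → ∀ k < 2 ^ j, |secDiff ω.1 j k| ≤ a j) (t : unitInterval) :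
    |ω.1 t - ωb.1 t| ≤ ((J + 1) * b + η) + S := by
  refine abs_sub_le_of_secDiff_le' ω J t (ωb.1 t) _ S ?_ a ha hS hhigh
  rintro s hs ⟨q, hq, rfl⟩
  have hu := abs_sub_le_of_secDiff_le (fun x => ω.1 x - ωb.1 x) 0 0 (by simp) 0 b
    (by simp [gridPt_one_zero, ω.2, ωb.2, hb]) (by simpa [gridPt_one_one] using h1)
    (fun _ => b) (fun _ => hb) J (by
      intro j _ hj k hk
      have := hlow j (by omega) k hk
      convert this using 2
      unfold secDiff; ring) q (by simp) (by simpa using hq)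
  simp only [zero_add, sub_zero, Finset.sum_const, Finset.card_range, nsmul_eq_mul] at hu
  have h2 := hosc _ _ hs
  rw [abs_le] at *
  constructor <;> linarith [hu.1, hu.2, h2.1, h2.2]

/-! ### Lower bounds for the measure of balls -/

/-- The embedding of pairs (generation, position) into the coefficient indices. -/
def idxEmb : (Σ _ : ℕ, ℕ) ↪ CoefIdx where
  toFun p := some (p.1, p.2)
  inj' := by
    rintro ⟨a, b⟩ ⟨c, d⟩ h
    simp only [Option.some.injEq, Prod.mk.injEq] at h
    rw [h.1, h.2]

/-- The second-difference indices of generations in `[J, M)`. -/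
def dyIdx (J M : ℕ) : Finset CoefIdx :=
  ((Finset.Ico J M).sigma fun j => Finset.range (2 ^ j)).map idxEmb

lemma mem_dyIdx {J M : ℕ} {o : CoefIdx} :
    o ∈ dyIdx J M ↔ ∃ j k, J ≤ j ∧ j < M ∧ k < 2 ^ j ∧ o = some (j, k) := by
  simp only [dyIdx, Finset.mem_map, Finset.mem_sigma, Finset.mem_Ico, Finset.mem_range]
  constructor
  · rintro ⟨⟨j, k⟩, ⟨⟨h1, h2⟩, h3⟩, rfl⟩
    exact ⟨j, k, h1, h2, h3, rfl⟩
  · rintro ⟨j, k, h1, h2, h3, rfl⟩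
    exact ⟨⟨j, k⟩, ⟨⟨h1, h2⟩, h3⟩, rfl⟩

lemma valid_of_mem_dyIdx {J M : ℕ} {o : CoefIdx} (h : o ∈ dyIdx J M) : o.Valid := by
  obtain ⟨j, k, -, -, hk, rfl⟩ := mem_dyIdx.1 h
  exact hk

lemma none_notMem_dyIdx (J M : ℕ) : (none : CoefIdx) ∉ dyIdx J M := by
  intro h
  obtain ⟨j, k, -, -, -, h⟩ := mem_dyIdx.1 h
  exact absurd h (by simp)

/-- The indices that determine the path on the dyadic grid of generation `J`. -/
def lowIdx (J : ℕ) : Finset CoefIdx := insert none (dyIdx 0 J)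

lemma valid_of_mem_lowIdx {J : ℕ} {o : CoefIdx} (h : o ∈ lowIdx J) : o.Valid := by
  rcases Finset.mem_insert.1 h with rfl | h
  · trivial
  · exact valid_of_mem_dyIdx h

lemma card_lowIdx (J : ℕ) : (lowIdx J).card = 2 ^ J := by
  rw [lowIdx, Finset.card_insert_of_notMem (none_notMem_dyIdx _ _), dyIdx, Finset.card_map,
    Finset.card_sigma]
  simp only [Finset.card_range, Nat.Ico_zero_eq_range]
  have := Nat.geomSum_eq (m := 2) le_rfl J
  rw [this]
  simp only [Nat.add_one_sub_one, Nat.div_one]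
  exact Nat.sub_add_cancel Nat.one_le_two_pow

lemma continuous_coef (o : CoefIdx) : Continuous (fun ω : PathSpace => coef ω o) := by
  simp only [coef_eq_sum]
  fun_prop

/-- Tail bound for the probability that some coefficient of high generation is large. -/
lemma exists_tail_le {ρ : ℝ} (hρ0 : 0 < ρ) (hρ : 1 < 2 * ρ ^ 2) :
    ∃ J₀ : ℕ, ∀ J ≥ J₀, ∀ M,
      ∑ j ∈ Finset.Ico J M, (2 : ℝ) ^ j * (2 * Real.exp (-(2 * (2 * ρ ^ 2) ^ j))) ≤ 1 / 2 := by
  have hsum : Summable fun j : ℕ => (2 : ℝ) ^ j * (2 * Real.exp (-(2 * (2 * ρ ^ 2) ^ j))) := by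
    have hg : Summable fun j : ℕ => 2 * ((2 : ℝ) / Real.exp 2) ^ j := by
      refine (summable_geometric_of_lt_one (by positivity) ?_).mul_left 2
      rw [div_lt_one (by positivity)]
      have := Real.add_one_le_exp (2 : ℝ)
      linarith
    refine hg.of_norm_bounded_eventually_nat ?_
    have hlim := tendsto_pow_const_div_const_pow_of_one_lt 1 hρ
    have hev : ∀ᶠ n : ℕ in atTop, (n : ℝ) ^ 1 / (2 * ρ ^ 2) ^ n < 1 :=
      hlim.eventually (gt_mem_nhds one_pos)
    filter_upwards [hev] with n hn
    rw [div_lt_one (by positivity), pow_one] at hn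
    rw [Real.norm_of_nonneg (by positivity), div_pow, ← Real.exp_nat_mul]
    rw [mul_left_comm, div_eq_mul_inv, ← Real.exp_neg]
    refine mul_le_mul_of_nonneg_left (mul_le_mul_of_nonneg_left (Real.exp_le_exp.2 ?_)
      (by positivity)) (by norm_num)
    linarith
  obtain ⟨s, hs⟩ := (summable_iff_vanishing_norm.1 hsum) (1 / 2) (by norm_num)
  refine ⟨s.sup id + 1, fun J hJ M => ?_⟩
  have hd : Disjoint (Finset.Ico J M) s := by
    rw [Finset.disjoint_left]
    intro x hx hxs
    have h1 := (Finset.mem_Ico.1 hx).1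
    have h2 : x ≤ s.sup id := Finset.le_sup (f := id) hxs
    omega
  exact (le_abs_self _).trans (hs _ hd).le

lemma coefVar_ne_zero (o : CoefIdx) : coefVar o ≠ 0 := by
  rcases o with _ | ⟨j, k⟩ <;> simp [coefVar]

lemma sum_dyIdx_le {ρ : ℝ} (hρ0 : 0 < ρ) (J M : ℕ) (A : CoefIdx → Set ℝ)
    (hA : ∀ j k, J ≤ j → A (some (j, k)) = Icc (-ρ ^ j) (ρ ^ j)) :
    ∑ o ∈ dyIdx J M, ProbabilityTheory.gaussianReal 0 (coefVar o) (A o)ᶜ ≤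
      ENNReal.ofReal (∑ j ∈ Finset.Ico J M,
        (2 : ℝ) ^ j * (2 * Real.exp (-(2 * (2 * ρ ^ 2) ^ j)))) := by
  rw [dyIdx, Finset.sum_map, Finset.sum_sigma, ENNReal.ofReal_sum_of_nonneg]
  swap
  · intro j _; positivity
  refine Finset.sum_le_sum fun j hj => ?_
  have hterm : ∀ k ∈ Finset.range (2 ^ j),
      ProbabilityTheory.gaussianReal 0 (coefVar (idxEmb ⟨j, k⟩)) (A (idxEmb ⟨j, k⟩))ᶜ ≤
        ENNReal.ofReal (2 * Real.exp (-(2 * (2 * ρ ^ 2) ^ j))) := by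
    intro k _
    change ProbabilityTheory.gaussianReal 0 (coefVar (some (j, k))) (A (some (j, k)))ᶜ ≤ _
    rw [hA j k (Finset.mem_Ico.1 hj).1]
    refine (gaussianReal_compl_Icc_le _ (by positivity)).trans (le_of_eq ?_)
    congr 3
    simp only [coefVar]
    push_cast
    rw [mul_pow, ← pow_mul]
    field_simp
    ring
  refine (Finset.sum_le_sum hterm).trans ?_
  rw [Finset.sum_const, Finset.card_range, nsmul_eq_mul,
    ENNReal.ofReal_mul (p := (2 : ℝ) ^ j) (by positivity), ENNReal.ofReal_pow (by norm_num)]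
  simp

lemma IsWienerMeasure.half_le_measure_coef {W : Measure PathSpace} (hW : IsWienerMeasure W)
    (S : Finset CoefIdx) (hS : ∀ o ∈ S, o.Valid) (A : CoefIdx → Set ℝ)
    (hA : ∀ o, MeasurableSet (A o))
    (hsum : ∑ o ∈ S, ProbabilityTheory.gaussianReal 0 (coefVar o) (A o)ᶜ ≤
      ENNReal.ofReal (1 / 2)) :
    1 / 2 ≤ ∏ o ∈ S, ProbabilityTheory.gaussianReal 0 (coefVar o) (A o) := by
  have := hW.1
  rw [← hW.measure_coef S hS A hA]
  have hmeas : MeasurableSet {ω : PathSpace | ∀ o ∈ S, coef ω o ∈ A o} := by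
    have : {ω : PathSpace | ∀ o ∈ S, coef ω o ∈ A o} =
        ⋂ o ∈ S, (fun ω => coef ω o) ⁻¹' A o := by ext; simp
    rw [this]
    exact Finset.measurableSet_biInter _ fun o _ => (continuous_coef o).measurable (hA o)
  have hcompl : W {ω : PathSpace | ∀ o ∈ S, coef ω o ∈ A o}ᶜ ≤ 1 / 2 := by
    have hsub : {ω : PathSpace | ∀ o ∈ S, coef ω o ∈ A o}ᶜ ⊆
        ⋃ o ∈ S, {ω | ∀ p ∈ ({o} : Finset CoefIdx), coef ω p ∈ (A p)ᶜ} := by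
      intro ω hω
      simp only [mem_compl_iff, mem_ofPred_eq, not_forall] at hω
      obtain ⟨o, ho, hn⟩ := hω
      simp only [mem_iUnion]
      exact ⟨o, ho, by simpa using hn⟩
    refine (measure_mono hsub).trans ((measure_biUnion_finset_le _ _).trans ?_)
    refine le_trans (Finset.sum_le_sum (g := fun o =>
      ProbabilityTheory.gaussianReal 0 (coefVar o) (A o)ᶜ) fun o ho => ?_) (hsum.trans ?_)
    · rw [hW.measure_coef {o} (by simpa using hS o ho) (fun p => (A p)ᶜ)
        (fun p => (hA p).compl), Finset.prod_singleton]
    · rw [ENNReal.ofReal_div_of_pos (by norm_num)]; simp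
  have htot := prob_add_prob_compl (μ := W) hmeas
  have h2 : (1 : ℝ≥0∞) = 1 / 2 + 1 / 2 := (ENNReal.add_halves 1).symm
  by_contra hlt
  rw [not_le] at hlt
  have : W {ω : PathSpace | ∀ o ∈ S, coef ω o ∈ A o} +
      W {ω : PathSpace | ∀ o ∈ S, coef ω o ∈ A o}ᶜ < 1 / 2 + 1 / 2 :=
    ENNReal.add_lt_add_of_lt_of_le (ne_top_of_le_ne_top (by simp) hcompl) hlt hcompl
  rw [htot, ← h2] at this
  exact lt_irrefl _ this

lemma mem_ball_of_forall_le {ω ωb : PathSpace} {r R : ℝ} (hr : 0 ≤ r) (hR : r < R)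
    (h : ∀ t, |ω.1 t - ωb.1 t| ≤ r) : ω ∈ Metric.ball ωb R := by
  rw [Metric.mem_ball, Subtype.dist_eq]
  refine lt_of_le_of_lt ((ContinuousMap.dist_le hr).2 fun t => ?_) hR
  rw [Real.dist_eq]
  exact h t

lemma abs_sub_lt_of_mem_ball {ω ωb : PathSpace} {R : ℝ} (h : ω ∈ Metric.ball ωb R)
    (t : unitInterval) : |ω.1 t - ωb.1 t| < R := by
  rw [Metric.mem_ball, Subtype.dist_eq] at h
  have := ContinuousMap.dist_apply_le_dist (f := ω.1) (g := ωb.1) t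
  rw [Real.dist_eq] at this
  linarith

lemma IsWienerMeasure.exists_le_measure_ball {W : Measure PathSpace} (hW : IsWienerMeasure W)
    {ρ : ℝ} (hρ0 : 0 < ρ) (hρ1 : ρ < 1) (hρ : 1 < 2 * ρ ^ 2) :
    ∃ J₀ : ℕ, ∀ J ≥ J₀, ∀ (ωb : PathSpace) (η b r : ℝ), 0 ≤ η → 0 < b →
      (∀ x y : unitInterval, |(x : ℝ) - y| ≤ (2 ^ J)⁻¹ → |ωb.1 x - ωb.1 y| ≤ η) →
      ((J + 1) * b + η) + ρ ^ J / (1 - ρ) < r →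
      1 / 2 * ∏ o ∈ lowIdx J, ProbabilityTheory.gaussianReal 0 (coefVar o)
        (Icc (coef ωb o - b) (coef ωb o + b)) ≤ W (Metric.ball ωb r) := by
  have := hW.1
  obtain ⟨J₀, hJ₀⟩ := exists_tail_le hρ0 hρ
  refine ⟨J₀, fun J hJ ωb η b r hη hb hosc hr => ?_⟩
  set A : CoefIdx → Set ℝ := fun o => if o ∈ lowIdx J then Icc (coef ωb o - b) (coef ωb o + b)
    else match o with
      | none => univ
      | some (j, _) => Icc (-ρ ^ j) (ρ ^ j) with hAdef
  have hAlow : ∀ o ∈ lowIdx J, A o = Icc (coef ωb o - b) (coef ωb o + b) := fun o ho => by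
    simp only [hAdef, if_pos ho]
  have hAhigh : ∀ j k, J ≤ j → A (some (j, k)) = Icc (-ρ ^ j) (ρ ^ j) := fun j k hj => by
    have : (some (j, k) : CoefIdx) ∉ lowIdx J := by
      intro h
      rcases Finset.mem_insert.1 h with h | h
      · exact absurd h (by simp)
      · obtain ⟨j', k', -, h2, -, h4⟩ := mem_dyIdx.1 h
        simp only [Option.some.injEq, Prod.mk.injEq] at h4
        omega
    simp only [hAdef, if_neg this]
  have hAm : ∀ o, MeasurableSet (A o) := by
    intro o
    by_cases ho : o ∈ lowIdx J
    · rw [hAlow o ho]; exact measurableSet_Icc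
    · simp only [hAdef, if_neg ho]
      rcases o with _ | ⟨j, k⟩
      · exact MeasurableSet.univ
      · exact measurableSet_Icc
  set E : ℕ → Set PathSpace := fun M => {ω | ∀ o ∈ lowIdx J ∪ dyIdx J M, coef ω o ∈ A o} with hE
  have hEm : ∀ M, MeasurableSet (E M) := by
    intro M
    have : E M = ⋂ o ∈ lowIdx J ∪ dyIdx J M, (fun ω => coef ω o) ⁻¹' A o := by ext; simp [hE]
    rw [this]
    exact Finset.measurableSet_biInter _ fun o _ => (continuous_coef o).measurable (hAm o)
  have hEanti : Antitone E := by
    intro M N hMN ω hω o ho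
    refine hω o ?_
    rcases Finset.mem_union.1 ho with ho | ho
    · exact Finset.mem_union_left _ ho
    · refine Finset.mem_union_right _ ?_
      obtain ⟨j, k, h1, h2, h3, h4⟩ := mem_dyIdx.1 ho
      exact mem_dyIdx.2 ⟨j, k, h1, by omega, h3, h4⟩
  have hbound : ∀ M, 1 / 2 * ∏ o ∈ lowIdx J, ProbabilityTheory.gaussianReal 0 (coefVar o)
        (Icc (coef ωb o - b) (coef ωb o + b)) ≤ W (E M) := by
    intro M
    have hdisj : Disjoint (lowIdx J) (dyIdx J M) := by
      rw [Finset.disjoint_left]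
      intro o ho ho'
      obtain ⟨j, k, h1, h2, h3, rfl⟩ := mem_dyIdx.1 ho'
      rcases Finset.mem_insert.1 ho with h | h
      · exact absurd h (by simp)
      · obtain ⟨j', k', -, h5, -, h4⟩ := mem_dyIdx.1 h
        simp only [Option.some.injEq, Prod.mk.injEq] at h4
        omega
    rw [hE, hW.measure_coef _ (fun o ho => by
      rcases Finset.mem_union.1 ho with ho | ho
      · exact valid_of_mem_lowIdx ho
      · exact valid_of_mem_dyIdx ho) A hAm, Finset.prod_union hdisj, mul_comm (1 / 2 : ℝ≥0∞)]
    refine mul_le_mul' (le_of_eq ?_) ?_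
    · exact Finset.prod_congr rfl fun o ho => by rw [hAlow o ho]
    · refine hW.half_le_measure_coef _ (fun o ho => valid_of_mem_dyIdx ho) A hAm ?_
      exact (sum_dyIdx_le hρ0 J M A hAhigh).trans (ENNReal.ofReal_le_ofReal (hJ₀ J hJ M))
  have hlim : Tendsto (fun M => W (E M)) atTop (𝓝 (W (⋂ M, E M))) :=
    tendsto_measure_iInter_atTop (fun M => (hEm M).nullMeasurableSet) hEanti
      ⟨0, measure_ne_top _ _⟩
  refine (ge_of_tendsto' hlim hbound).trans (measure_mono fun ω hω => ?_)
  rw [mem_iInter] at hω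
  have hlowmem : ∀ o ∈ lowIdx J, |coef ω o - coef ωb o| ≤ b := by
    intro o ho
    have := hω 0 o (Finset.mem_union_left _ ho)
    rw [hAlow o ho] at this
    exact abs_le.2 ⟨by linarith [this.1], by linarith [this.2]⟩
  have hρ' : 0 < 1 - ρ := by linarith
  refine mem_ball_of_forall_le (by positivity) hr
    (abs_sub_le_of_coef ω ωb J b η _ hb.le (fun j => ρ ^ j) (fun j => by positivity) ?_ hosc
      ?_ ?_ ?_)
  · intro m
    simp_rw [pow_add, ← Finset.mul_sum]
    rw [div_eq_mul_inv]
    gcongr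
    rw [← tsum_geometric_of_lt_one hρ0.le hρ1]
    exact (summable_geometric_of_lt_one hρ0.le hρ1).sum_le_tsum _ fun _ _ => by positivity
  · exact hlowmem none (Finset.mem_insert_self _ _)
  · intro j hj k hk
    exact hlowmem (some (j, k))
      (Finset.mem_insert_of_mem (mem_dyIdx.2 ⟨j, k, by omega, hj, hk, rfl⟩))
  · intro j hj k hk
    have := hω (j + 1) (some (j, k))
      (Finset.mem_union_right _ (mem_dyIdx.2 ⟨j, k, hj, by omega, hk, rfl⟩))
    rw [hAhigh j k hj] at this
    exact abs_le.2 this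

/-! ### Local orders from bounds on the measure of balls -/

lemma tendsto_neg_log_nhdsGT_zero : Tendsto (fun ε : ℝ => -Real.log ε) (𝓝[>] 0) atTop :=
  tendsto_neg_atBot_atTop.comp Real.tendsto_log_nhdsGT_zero

lemma tendsto_log_mul_rpow_div {C : ℝ} (hC : 0 < C) (p : ℝ) :
    Tendsto (fun ε : ℝ => ((Real.log (C * ε ^ (-p)) / (-Real.log ε) : ℝ) : EReal)) (𝓝[>] 0)
      (𝓝 (p : EReal)) := by
  refine (continuous_coe_real_ereal.tendsto p).comp ?_
  have h1 : Tendsto (fun ε : ℝ => Real.log C / (-Real.log ε) + p) (𝓝[>] 0) (𝓝 (0 + p)) :=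
    (tendsto_neg_log_nhdsGT_zero.const_div_atTop _).add_const p
  rw [zero_add] at h1
  refine h1.congr' ?_
  filter_upwards [Ioo_mem_nhdsGT (zero_lt_one' ℝ)] with ε hε
  have hl : Real.log ε < 0 := Real.log_neg hε.1 hε.2
  rw [Real.log_mul hC.ne' (Real.rpow_pos_of_pos hε.1 _).ne', Real.log_rpow hε.1]
  field_simp [hl.ne]
  ring

lemma upperLocOrd_le {μ : Measure PathSpace} [IsProbabilityMeasure μ] {ω : PathSpace} {C p : ℝ}
    (hC : 0 < C) (hp : 0 < p)
    (h : ∀ᶠ ε in 𝓝[>] (0 : ℝ), Real.exp (-(C * ε ^ (-p))) ≤ (μ (Metric.ball ω ε)).toReal) :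
    upperLocOrd μ ω ≤ (p : EReal) := by
  rw [upperLocOrd, ← (tendsto_log_mul_rpow_div hC p).limsup_eq]
  refine limsup_le_limsup ?_
  have hbig : ∀ᶠ ε in 𝓝[>] (0 : ℝ), 1 ≤ C * ε ^ (-p) :=
    ((tendsto_rpow_neg_nhdsGT_zero (neg_neg_of_pos hp)).const_mul_atTop hC).eventually_ge_atTop 1
  filter_upwards [h, hbig, Ioo_mem_nhdsGT (zero_lt_one' ℝ)] with ε hε h1 hε1
  have hl : Real.log ε < 0 := Real.log_neg hε1.1 hε1.2
  refine EReal.coe_le_coe_iff.2 (div_le_div_of_nonneg_right ?_ (by linarith))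
  set m := (μ (Metric.ball ω ε)).toReal
  have hm1 : m ≤ 1 := ENNReal.toReal_le_of_le_ofReal zero_le_one (by simpa using prob_le_one)
  have hm0 : 0 < m := (Real.exp_pos _).trans_le hε
  have hle : -Real.log m ≤ C * ε ^ (-p) := by
    have := (Real.le_log_iff_exp_le hm0).2 hε
    linarith
  have hnn : 0 ≤ -Real.log m := by
    have := Real.log_nonpos hm0.le hm1
    linarith
  rcases hnn.eq_or_lt with h0 | h0
  · rw [← h0, Real.log_zero]
    exact Real.log_nonneg h1
  · exact Real.log_le_log h0 hle

lemma le_lowerLocOrd {μ : Measure PathSpace} {ω : PathSpace} {C p : ℝ} (hC : 0 < C)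
    (h0 : ∀ ε > 0, 0 < (μ (Metric.ball ω ε)).toReal)
    (h : ∀ᶠ ε in 𝓝[>] (0 : ℝ), (μ (Metric.ball ω ε)).toReal ≤ Real.exp (-(C * ε ^ (-p)))) :
    (p : EReal) ≤ lowerLocOrd μ ω := by
  rw [lowerLocOrd, ← (tendsto_log_mul_rpow_div hC p).liminf_eq]
  refine liminf_le_liminf ?_
  filter_upwards [h, Ioo_mem_nhdsGT (zero_lt_one' ℝ)] with ε hε hε1
  have hl : Real.log ε < 0 := Real.log_neg hε1.1 hε1.2
  refine EReal.coe_le_coe_iff.2 (div_le_div_of_nonneg_right ?_ (by linarith))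
  have hle := (Real.log_le_iff_le_exp (h0 ε hε1.1)).2 hε
  exact Real.log_le_log (mul_pos hC (Real.rpow_pos_of_pos hε1.1 _)) (by linarith)

lemma lowerLocOrd_le_upperLocOrd (μ : Measure PathSpace) (ω : PathSpace) :
    lowerLocOrd μ ω ≤ upperLocOrd μ ω := liminf_le_limsup

/-! ### Wiener measure of balls around Hölder paths -/

lemma IsWienerMeasure.measure_ball_pos {W : Measure PathSpace} (hW : IsWienerMeasure W)
    (ωb : PathSpace) {ε : ℝ} (hε : 0 < ε) : 0 < (W (Metric.ball ωb ε)).toReal := by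
  have := hW.1
  refine ENNReal.toReal_pos ?_ (measure_ne_top _ _)
  obtain ⟨J₀, hJ₀⟩ := hW.exists_le_measure_ball (ρ := 4 / 5) (by norm_num) (by norm_num)
    (by norm_num)
  have huc := CompactSpace.uniformContinuous_of_continuous ωb.1.continuous
  obtain ⟨δ, hδ, hosc⟩ := Metric.uniformContinuous_iff.1 huc (ε / 4) (by positivity)
  have h1 : ∀ᶠ J : ℕ in atTop, ((1 : ℝ) / 2) ^ J < δ :=
    (tendsto_pow_atTop_nhds_zero_of_lt_one (by norm_num) (by norm_num)).eventually
      (gt_mem_nhds hδ)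
  have h2 : ∀ᶠ J : ℕ in atTop, ((4 : ℝ) / 5) ^ J < ε / 20 :=
    (tendsto_pow_atTop_nhds_zero_of_lt_one (by norm_num) (by norm_num)).eventually
      (gt_mem_nhds (by positivity))
  obtain ⟨J, hJ1, hJ2, hJ3⟩ := (h1.and (h2.and (eventually_ge_atTop J₀))).exists
  have hJ0 : (0 : ℝ) < J + 1 := by positivity
  have hle := hJ₀ J hJ3 ωb (ε / 4) (ε / 4 / (J + 1)) ε (by positivity) (by positivity)
    (fun x y hxy => by
      have : dist x y < δ := by
        rw [Subtype.dist_eq, Real.dist_eq]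
        refine lt_of_le_of_lt hxy ?_
        rw [← inv_pow]
        simpa using hJ1
      have := hosc this
      rw [Real.dist_eq] at this
      exact this.le)
    (by
      rw [mul_div_cancel₀ _ hJ0.ne']
      norm_num at hJ2 ⊢
      linarith)
  refine (lt_of_lt_of_le ?_ hle).ne'
  refine ENNReal.mul_pos (by norm_num) (Finset.prod_ne_zero_iff.2 fun o _ => ?_)
  refine (lt_of_lt_of_le (ENNReal.ofReal_pos.2 ?_)
    (le_gaussianReal_Icc (coefVar_ne_zero o) _ (by positivity))).ne'
  have : (0 : ℝ) < coefVar o := by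
    exact_mod_cast pos_iff_ne_zero.2 (coefVar_ne_zero o)
  have := Real.pi_pos
  positivity

lemma exists_nonneg_of_mem_holderSet {β : ℝ} {ω : PathSpace} (h : ω ∈ holderSet β) :
    ∃ K : ℝ, 0 ≤ K ∧ ∀ x y : unitInterval, |ω.1 x - ω.1 y| ≤ K * |(x : ℝ) - y| ^ β := by
  obtain ⟨C, hC⟩ := h
  refine ⟨|C|, abs_nonneg C, fun x y => (hC x y).trans ?_⟩
  exact mul_le_mul_of_nonneg_right (le_abs_self C) (by positivity)

lemma abs_secDiff_le {β K : ℝ} (hβ : 0 < β) (hK : 0 ≤ K) {f : unitInterval → ℝ}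
    (h : ∀ x y : unitInterval, |f x - f y| ≤ K * |(x : ℝ) - y| ^ β) {j k : ℕ} (hk : k < 2 ^ j) :
    |secDiff f j k| ≤ K * ((2 : ℝ) ^ j) ^ (-β) := by
  have hp : (0 : ℝ) < 2 ^ j := by positivity
  have hb : ∀ t : ℝ, |t| ≤ (2 ^ j)⁻¹ → K * |t| ^ β ≤ K * ((2 : ℝ) ^ j) ^ (-β) := by
    intro t ht
    rw [Real.rpow_neg hp.le, ← Real.inv_rpow hp.le]
    exact mul_le_mul_of_nonneg_left (Real.rpow_le_rpow (abs_nonneg t) ht hβ.le) hK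
  have hm : ((gridPt (2 ^ (j + 1)) (2 * k + 1) : unitInterval) : ℝ) =
      (2 * k + 1) / (2 * 2 ^ j) := by
    rw [coe_gridPt (by rw [pow_succ]; omega)]
    push_cast
    rw [pow_succ]
    ring
  have hl : ((gridPt (2 ^ j) k : unitInterval) : ℝ) = k / 2 ^ j := by
    rw [coe_gridPt (by omega)]; push_cast; rfl
  have hr : ((gridPt (2 ^ j) (k + 1) : unitInterval) : ℝ) = (k + 1) / 2 ^ j := by
    rw [coe_gridPt (by omega)]; push_cast; rfl
  have h1 := (h (gridPt (2 ^ (j + 1)) (2 * k + 1)) (gridPt (2 ^ j) k)).trans (hb _ (by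
    rw [hm, hl, show ((2 * k + 1) / (2 * 2 ^ j) - k / 2 ^ j : ℝ) = (2 ^ j)⁻¹ / 2 by
      field_simp; ring, abs_of_pos (by positivity)]
    linarith [inv_pos.2 hp]))
  have h2 := (h (gridPt (2 ^ (j + 1)) (2 * k + 1)) (gridPt (2 ^ j) (k + 1))).trans (hb _ (by
    rw [hm, hr, show ((2 * k + 1) / (2 * 2 ^ j) - (k + 1) / 2 ^ j : ℝ) = -((2 ^ j)⁻¹ / 2) by
      field_simp; ring, abs_neg, abs_of_pos (by positivity)]
    linarith [inv_pos.2 hp]))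
  rw [abs_le] at h1 h2 ⊢
  unfold secDiff
  constructor <;> linarith [h1.1, h1.2, h2.1, h2.2]

lemma sq_coef_div_coefVar_le {β K : ℝ} (hβ : 0 < β) (hβ2 : β < 1 / 2) (hK : 0 ≤ K)
    {ω : PathSpace} (h : ∀ x y : unitInterval, |ω.1 x - ω.1 y| ≤ K * |(x : ℝ) - y| ^ β) {J : ℕ}
    {o : CoefIdx} (ho : o ∈ lowIdx J) :
    coef ω o ^ 2 / coefVar o ≤ 4 * K ^ 2 * ((2 : ℝ) ^ J) ^ (1 - 2 * β) := by
  have h2J : (1 : ℝ) ≤ 2 ^ J := one_le_pow₀ (by norm_num)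
  rcases Finset.mem_insert.1 ho with rfl | ho
  · have h1 := h 1 0
    rw [ω.2] at h1
    simp only [sub_zero, Icc.coe_one, Icc.coe_zero, abs_one, Real.one_rpow, mul_one] at h1
    have h3 : ω.1 1 ^ 2 ≤ K ^ 2 := by
      rw [← sq_abs]; exact pow_le_pow_left₀ (abs_nonneg _) h1 2
    have h4 : 1 ≤ ((2 : ℝ) ^ J) ^ (1 - 2 * β) := Real.one_le_rpow h2J (by linarith)
    simp only [coef, coefVar, NNReal.coe_one, div_one]
    nlinarith [sq_nonneg K]
  · obtain ⟨j, k, -, hjJ, hk, rfl⟩ := mem_dyIdx.1 ho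
    have hp : (0 : ℝ) < 2 ^ j := by positivity
    have h1 := abs_secDiff_le hβ hK h hk
    have h3 : secDiff ω.1 j k ^ 2 ≤ (K * ((2 : ℝ) ^ j) ^ (-β)) ^ 2 := by
      rw [← sq_abs]; exact pow_le_pow_left₀ (abs_nonneg _) h1 2
    have h4 : ((2 : ℝ) ^ j) ^ (1 - 2 * β) ≤ ((2 : ℝ) ^ J) ^ (1 - 2 * β) :=
      Real.rpow_le_rpow hp.le (pow_le_pow_right₀ (by norm_num) hjJ.le) (by linarith)
    have h5 : ((2 : ℝ) ^ j) ^ (1 - 2 * β) = 2 ^ j * (((2 : ℝ) ^ j) ^ (-β)) ^ 2 := by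
      rw [sub_eq_add_neg, Real.rpow_add hp, Real.rpow_one,
        ← Real.rpow_mul_natCast hp.le]
      congr 2
      push_cast; ring
    simp only [coef, coefVar]
    push_cast
    calc secDiff ω.1 j k ^ 2 / ((2 ^ j)⁻¹ / 4) = 4 * 2 ^ j * secDiff ω.1 j k ^ 2 := by
          field_simp
      _ ≤ 4 * 2 ^ j * (K * ((2 : ℝ) ^ j) ^ (-β)) ^ 2 := by gcongr
      _ = 4 * K ^ 2 * ((2 : ℝ) ^ j) ^ (1 - 2 * β) := by rw [h5]; ring
      _ ≤ _ := by gcongr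

lemma coefVar_le_one (o : CoefIdx) : (coefVar o : ℝ) ≤ 1 := by
  rcases o with _ | ⟨j, k⟩
  · simp [coefVar]
  · simp only [coefVar]
    push_cast
    have : ((2 : ℝ) ^ j)⁻¹ ≤ 1 := inv_le_one_of_one_le₀ (one_le_pow₀ (by norm_num))
    linarith

lemma inv_coefVar_le {J : ℕ} {o : CoefIdx} (ho : o ∈ lowIdx J) :
    (coefVar o : ℝ)⁻¹ ≤ 4 * 2 ^ J := by
  have h2J : (1 : ℝ) ≤ 2 ^ J := one_le_pow₀ (by norm_num)
  rcases Finset.mem_insert.1 ho with rfl | ho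
  · simp only [coefVar, NNReal.coe_one, inv_one]; linarith
  · obtain ⟨j, k, -, hjJ, hk, rfl⟩ := mem_dyIdx.1 ho
    simp only [coefVar]
    push_cast
    rw [inv_div, div_inv_eq_mul]
    gcongr
    · norm_num

lemma exp_le_gaussianReal_coef {β K : ℝ} (hβ : 0 < β) (hβ2 : β < 1 / 2) (hK : 0 ≤ K)
    {ω : PathSpace} (h : ∀ x y : unitInterval, |ω.1 x - ω.1 y| ≤ K * |(x : ℝ) - y| ^ β) {J : ℕ}
    {o : CoefIdx} (ho : o ∈ lowIdx J) :
    ENNReal.ofReal (Real.exp (-((4 * K ^ 2 + 5 + 2 / (1 - 2 * β)) *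
      ((2 : ℝ) ^ J) ^ (1 - 2 * β)))) ≤
      ProbabilityTheory.gaussianReal 0 (coefVar o)
        (Icc (coef ω o - ((2 ^ J) ^ 2)⁻¹) (coef ω o + ((2 ^ J) ^ 2)⁻¹)) := by
  have hx : (1 : ℝ) ≤ 2 ^ J := one_le_pow₀ (by norm_num)
  have hsq := sq_coef_div_coefVar_le hβ hβ2 hK h ho
  have hinv := inv_coefVar_le ho
  have hv0 : (0 : ℝ) < coefVar o := by exact_mod_cast pos_iff_ne_zero.2 (coefVar_ne_zero o)
  have hv1 := coefVar_le_one o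
  refine le_trans (ENNReal.ofReal_le_ofReal ?_)
    (le_gaussianReal_Icc (coefVar_ne_zero o) _ (by positivity))
  generalize (coefVar o : ℝ) = v at *
  generalize coef ω o = z at *
  generalize (2 : ℝ) ^ J = x at *
  have hx0 : 0 < x := by linarith
  set s := 1 - 2 * β with hs
  have hs0 : 0 < s := by linarith
  have hlog : Real.log x ≤ x ^ s / s := Real.log_le_rpow_div hx0.le hs0
  have hxs : 1 ≤ x ^ s := Real.one_le_rpow hx hs0.le
  have hsqrt : (1 : ℝ) / 4 ≤ (√(2 * Real.pi * v))⁻¹ := by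
    rw [one_div]
    have hpi := Real.pi_le_four
    have hpi0 := Real.pi_pos
    refine inv_anti₀ (Real.sqrt_pos.2 (by positivity)) ((Real.sqrt_le_left (by norm_num)).2 ?_)
    nlinarith
  have ha : ((x ^ 2)⁻¹) ^ 2 / v ≤ 4 := by
    have h1 : ((x ^ 2)⁻¹) ^ 2 ≤ x⁻¹ := by
      rw [inv_pow, ← pow_mul]
      exact inv_anti₀ hx0 (le_self_pow₀ hx (by norm_num))
    rw [div_eq_mul_inv]
    calc ((x ^ 2)⁻¹) ^ 2 * v⁻¹ ≤ x⁻¹ * (4 * x) := by gcongr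
      _ = 4 := by field_simp
  have hexp : Real.exp (-(2 / s * x ^ s + 1)) ≤ (x ^ 2)⁻¹ / 2 := by
    have h2 : Real.log 2 ≤ 1 := by linarith [Real.log_two_lt_d9]
    rw [← Real.le_log_iff_exp_le (by positivity), Real.log_div (by positivity) (by norm_num),
      Real.log_inv, Real.log_pow]
    have : 2 / s * x ^ s = 2 * (x ^ s / s) := by ring
    push_cast
    linarith
  calc Real.exp (-((4 * K ^ 2 + 5 + 2 / s) * x ^ s))
      ≤ Real.exp (-(2 / s * x ^ s + 1) + -(4 * K ^ 2 * x ^ s + 4)) := by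
        refine Real.exp_le_exp.2 ?_
        nlinarith
    _ = Real.exp (-(2 / s * x ^ s + 1)) * Real.exp (-(4 * K ^ 2 * x ^ s + 4)) := Real.exp_add _ _
    _ ≤ ((x ^ 2)⁻¹ / 2) * Real.exp (-(z ^ 2 + ((x ^ 2)⁻¹) ^ 2) / v) := by
        refine mul_le_mul hexp (Real.exp_le_exp.2 ?_) (Real.exp_pos _).le (by positivity)
        rw [neg_div, add_div]
        linarith
    _ = 2 * (x ^ 2)⁻¹ * (1 / 4 * Real.exp (-(z ^ 2 + ((x ^ 2)⁻¹) ^ 2) / v)) := by ring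
    _ ≤ _ := by gcongr

lemma IsWienerMeasure.exists_exp_le_measure_ball {W : Measure PathSpace} (hW : IsWienerMeasure W)
    {β : ℝ} (hβ : 0 < β) (hβ2 : β < 1 / 2) {ωb : PathSpace} (h : ωb ∈ holderSet β) :
    ∃ C₁ C₂ : ℝ, 0 < C₁ ∧ 0 < C₂ ∧ ∃ J₀ : ℕ, ∀ J ≥ J₀,
      Real.exp (-(C₂ * ((2 : ℝ) ^ J) ^ (2 - 2 * β))) ≤
        (W (Metric.ball ωb (C₁ * ((2 : ℝ) ^ J) ^ (-β)))).toReal := by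
  have := hW.1
  obtain ⟨K, hK, hh⟩ := exists_nonneg_of_mem_holderSet h
  set ρ : ℝ := 2 ^ (-β) with hρ
  have hρ0 : 0 < ρ := by positivity
  have hρ1 : ρ < 1 := Real.rpow_lt_one_of_one_lt_of_neg (by norm_num) (by linarith)
  have hρ2 : 1 < 2 * ρ ^ 2 := by
    have : 2 * ρ ^ 2 = 2 ^ (1 - 2 * β) := by
      rw [hρ, ← Real.rpow_natCast, ← Real.rpow_mul (by norm_num), sub_eq_add_neg,
        Real.rpow_add (by norm_num), Real.rpow_one]
      congr 2
      push_cast; ring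
    rw [this]
    exact Real.one_lt_rpow (by norm_num) (by linarith)
  have h1ρ : 0 < 1 - ρ := by linarith
  obtain ⟨J₀, hJ₀⟩ := hW.exists_le_measure_ball hρ0 hρ1 hρ2
  set D := 4 * K ^ 2 + 5 + 2 / (1 - 2 * β) with hD
  have hD0 : 0 < D := by
    have : 0 < 2 / (1 - 2 * β) := div_pos (by norm_num) (by linarith)
    positivity
  refine ⟨2 + K + 1 / (1 - ρ), D + 1, by positivity, by positivity, J₀, fun J hJ => ?_⟩
  have hx : (1 : ℝ) ≤ 2 ^ J := one_le_pow₀ (by norm_num)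
  have hx0 : (0 : ℝ) < 2 ^ J := by positivity
  have hρJ : ρ ^ J = ((2 : ℝ) ^ J) ^ (-β) := by
    rw [hρ, ← Real.rpow_natCast, ← Real.rpow_natCast, ← Real.rpow_mul (by norm_num),
      ← Real.rpow_mul (by norm_num), mul_comm]
  have hle := hJ₀ J hJ ωb (K * ((2 : ℝ) ^ J) ^ (-β)) (((2 : ℝ) ^ J) ^ 2)⁻¹
    ((2 + K + 1 / (1 - ρ)) * ((2 : ℝ) ^ J) ^ (-β)) (by positivity) (by positivity)
    (fun x y hxy => (hh x y).trans (by
      rw [Real.rpow_neg hx0.le, ← Real.inv_rpow hx0.le]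
      exact mul_le_mul_of_nonneg_left (Real.rpow_le_rpow (abs_nonneg _) hxy hβ.le) hK))
    (by
      have hJ1 : (J : ℝ) + 1 ≤ 2 ^ J := by exact_mod_cast (Nat.lt_two_pow_self (n := J))
      have h1 : (J + 1 : ℝ) * (((2 : ℝ) ^ J) ^ 2)⁻¹ ≤ ((2 : ℝ) ^ J) ^ (-β) := by
        calc (J + 1 : ℝ) * (((2 : ℝ) ^ J) ^ 2)⁻¹ ≤ 2 ^ J * (((2 : ℝ) ^ J) ^ 2)⁻¹ := by gcongr
          _ = ((2 : ℝ) ^ J) ^ (-1 : ℝ) := by rw [Real.rpow_neg_one]; field_simp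
          _ ≤ _ := Real.rpow_le_rpow_of_exponent_le hx (by linarith)
      have h2 : 0 < ((2 : ℝ) ^ J) ^ (-β) := by positivity
      rw [hρJ, add_mul, add_mul, one_div, div_eq_mul_inv, mul_comm (1 - ρ)⁻¹]
      linarith)
  rw [← ENNReal.ofReal_le_iff_le_toReal (measure_ne_top _ _)]
  refine le_trans ?_ hle
  calc ENNReal.ofReal (Real.exp (-((D + 1) * ((2 : ℝ) ^ J) ^ (2 - 2 * β))))
      ≤ ENNReal.ofReal (1 / 2 *
          (Real.exp (-(D * ((2 : ℝ) ^ J) ^ (1 - 2 * β)))) ^ (2 ^ J : ℕ)) := by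
        refine ENNReal.ofReal_le_ofReal ?_
        have he : ((2 : ℝ) ^ J) ^ (2 - 2 * β) = 2 ^ J * ((2 : ℝ) ^ J) ^ (1 - 2 * β) := by
          rw [show 2 - 2 * β = 1 + (1 - 2 * β) by ring, Real.rpow_add hx0, Real.rpow_one]
        have h1 : (1 : ℝ) ≤ ((2 : ℝ) ^ J) ^ (2 - 2 * β) := Real.one_le_rpow hx (by linarith)
        have h2 : Real.exp (-1) ≤ 1 / 2 := by
          rw [Real.exp_neg, one_div]
          exact inv_anti₀ (by norm_num) (by linarith [Real.add_one_le_exp (1 : ℝ)])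
        rw [← Real.exp_nat_mul]
        push_cast
        calc Real.exp (-((D + 1) * ((2 : ℝ) ^ J) ^ (2 - 2 * β)))
            ≤ Real.exp (-1 + 2 ^ J * -(D * ((2 : ℝ) ^ J) ^ (1 - 2 * β))) := by
              refine Real.exp_le_exp.2 ?_
              rw [show (2 : ℝ) ^ J * -(D * ((2 : ℝ) ^ J) ^ (1 - 2 * β)) =
                -(D * ((2 : ℝ) ^ J) ^ (2 - 2 * β)) by rw [he]; ring]
              linarith
          _ = _ := Real.exp_add _ _
          _ ≤ _ := by gcongr
    _ = 1 / 2 * ∏ _o ∈ lowIdx J,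
          ENNReal.ofReal (Real.exp (-(D * ((2 : ℝ) ^ J) ^ (1 - 2 * β)))) := by
        rw [Finset.prod_const, card_lowIdx, ENNReal.ofReal_mul (by norm_num),
          ENNReal.ofReal_pow (Real.exp_pos _).le]
        simp
    _ ≤ _ := by
        refine mul_le_mul_right (Finset.prod_le_prod' fun o ho => ?_) _
        exact exp_le_gaussianReal_coef hβ hβ2 hK hh ho

lemma IsWienerMeasure.upperLocOrd_le_of_mem_holderSet {W : Measure PathSpace}
    (hW : IsWienerMeasure W) {β : ℝ} (hβ : 0 < β) (hβ2 : β < 1 / 2) {ωb : PathSpace}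
    (h : ωb ∈ holderSet β) : upperLocOrd W ωb ≤ (((2 - 2 * β) / β : ℝ) : EReal) := by
  have := hW.1
  obtain ⟨C₁, C₂, hC₁, hC₂, J₀, hJ⟩ := hW.exists_exp_le_measure_ball hβ hβ2 h
  have hq : 0 < 2 - 2 * β := by linarith
  refine upperLocOrd_le (C := C₂ * (2 * C₁ ^ (1 / β)) ^ (2 - 2 * β)) (by positivity)
    (div_pos hq hβ) ?_
  have hbig : Tendsto (fun ε : ℝ => (C₁ * ε⁻¹) ^ (1 / β)) (𝓝[>] 0) atTop :=
    (tendsto_rpow_atTop (by positivity)).comp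
      (tendsto_inv_nhdsGT_zero.const_mul_atTop hC₁)
  filter_upwards [hbig.eventually_ge_atTop (2 ^ J₀), self_mem_nhdsWithin] with ε hε hε0
  have hε0 : 0 < ε := hε0
  set y := (C₁ * ε⁻¹) ^ (1 / β) with hy
  have hy1 : 1 ≤ y := le_trans (one_le_pow₀ (by norm_num)) hε
  obtain ⟨n, hn1, hn2⟩ := exists_nat_pow_near hy1 (one_lt_two)
  have hJn : J₀ ≤ n + 1 := by
    have := (hε.trans_lt hn2).le
    exact (pow_le_pow_iff_right₀ (by norm_num : (1 : ℝ) < 2)).1 this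
  have hyβ : C₁ * y ^ (-β) = ε := by
    rw [hy, ← Real.rpow_mul (by positivity), show 1 / β * -β = -1 by field_simp,
      Real.rpow_neg_one]
    field_simp
  refine le_trans ?_ ((hJ (n + 1) hJn).trans (ENNReal.toReal_mono (measure_ne_top _ _)
    (measure_mono (Metric.ball_subset_ball ?_))))
  · refine Real.exp_le_exp.2 (neg_le_neg ?_)
    have h1 : (2 : ℝ) ^ (n + 1) ≤ 2 * y := by rw [pow_succ]; linarith
    have h2 : (2 * y) ^ (2 - 2 * β) =
        (2 * C₁ ^ (1 / β)) ^ (2 - 2 * β) * ε ^ (-((2 - 2 * β) / β)) := by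
      rw [hy, Real.mul_rpow hC₁.le (by positivity), ← mul_assoc,
        Real.mul_rpow (x := 2 * C₁ ^ (1 / β)) (by positivity) (by positivity), Real.inv_rpow hε0.le,
        ← Real.rpow_neg hε0.le, ← Real.rpow_mul hε0.le]
      congr 2
      ring
    rw [mul_assoc, ← h2]
    gcongr
  · rw [← hyβ]
    refine mul_le_mul_of_nonneg_left ?_ hC₁.le
    exact Real.rpow_le_rpow_of_nonpos (by linarith) hn2.le (by linarith)

/-! ### Upper bounds for the Wiener measure of balls -/

lemma abs_secDiff_sub_le {f g : unitInterval → ℝ} {ε : ℝ} (h : ∀ t, |f t - g t| ≤ ε) (j k : ℕ) :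
    |secDiff f j k - secDiff g j k| ≤ 2 * ε := by
  have h1 := h (gridPt (2 ^ (j + 1)) (2 * k + 1))
  have h2 := h (gridPt (2 ^ j) k)
  have h3 := h (gridPt (2 ^ j) (k + 1))
  rw [abs_le] at h1 h2 h3 ⊢
  unfold secDiff
  constructor <;> linarith [h1.1, h1.2, h2.1, h2.2, h3.1, h3.2]

lemma card_dyIdx_succ (j : ℕ) : (dyIdx j (j + 1)).card = 2 ^ j := by
  simp [dyIdx, Finset.card_map, Finset.card_sigma]

lemma IsWienerMeasure.measure_ball_le_half_pow {W : Measure PathSpace} (hW : IsWienerMeasure W)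
    (ωb : PathSpace) {ε : ℝ} (hε : 0 < ε) {j : ℕ} (hj : 2 ^ j * (64 * ε ^ 2) ≤ 1) :
    W (Metric.ball ωb ε) ≤ (1 / 2) ^ 2 ^ j := by
  calc W (Metric.ball ωb ε)
      ≤ W {ω | ∀ o ∈ dyIdx j (j + 1), coef ω o ∈ Icc (coef ωb o - 2 * ε) (coef ωb o + 2 * ε)} := by
        refine measure_mono fun ω hω o ho => ?_
        obtain ⟨i, k, -, -, -, rfl⟩ := mem_dyIdx.1 ho
        have := abs_le.1
          (abs_secDiff_sub_le (fun t => (abs_sub_lt_of_mem_ball hω t).le) i k)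
        simp only [coef, mem_Icc]
        constructor <;> linarith [this.1, this.2]
    _ = ∏ o ∈ dyIdx j (j + 1), ProbabilityTheory.gaussianReal 0 (coefVar o)
          (Icc (coef ωb o - 2 * ε) (coef ωb o + 2 * ε)) :=
        hW.measure_coef _ (fun o ho => valid_of_mem_dyIdx ho) _ fun o => measurableSet_Icc
    _ ≤ ∏ _o ∈ dyIdx j (j + 1), (1 / 2 : ℝ≥0∞) := by
        refine Finset.prod_le_prod' fun o ho => (gaussianReal_Icc_le (coefVar_ne_zero o) _ _).trans ?_
        obtain ⟨i, k, hi, hi', -, rfl⟩ := mem_dyIdx.1 ho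
        obtain rfl : i = j := by omega
        rw [show (1 / 2 : ℝ≥0∞) = ENNReal.ofReal (1 / 2) by simp]
        refine ENNReal.ofReal_le_ofReal ?_
        simp only [coefVar]
        push_cast
        have hpi := Real.pi_gt_three
        have h8 : 8 * ε ≤ √(2 * Real.pi * ((2 ^ i)⁻¹ / 4)) := by
          refine Real.le_sqrt_of_sq_le ?_
          have hp : (0 : ℝ) < 2 ^ i := by positivity
          have : 64 * ε ^ 2 ≤ (2 ^ i)⁻¹ := by
            rw [← one_div, le_div_iff₀ hp]; linarith
          nlinarith [inv_pos.2 hp]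
        have h0 : 0 < √(2 * Real.pi * ((2 ^ i)⁻¹ / 4)) := by positivity
        rw [← div_eq_mul_inv, div_le_iff₀ h0]
        linarith
    _ = (1 / 2) ^ 2 ^ j := by rw [Finset.prod_const, card_dyIdx_succ]

lemma half_pow_eq_exp (n : ℕ) : ((1 : ℝ) / 2) ^ n = Real.exp (-(Real.log 2 * n)) := by
  rw [Real.exp_neg, mul_comm, Real.exp_nat_mul, Real.exp_log (by norm_num), one_div, inv_pow]

lemma IsWienerMeasure.two_le_lowerLocOrd {W : Measure PathSpace} (hW : IsWienerMeasure W)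
    (ω : PathSpace) : ((2 : ℝ) : EReal) ≤ lowerLocOrd W ω := by
  have := hW.1
  refine le_lowerLocOrd (C := Real.log 2 / 128) (by positivity)
    (fun ε hε => hW.measure_ball_pos ω hε) ?_
  filter_upwards [Ioo_mem_nhdsGT (show (0 : ℝ) < 1 / 8 by norm_num)] with ε hε
  have hε0 : 0 < ε := hε.1
  have hy : 1 ≤ (64 * ε ^ 2)⁻¹ := by
    refine (one_le_inv₀ (by positivity)).2 ?_
    nlinarith [hε.2]
  obtain ⟨n, hn1, hn2⟩ := exists_nat_pow_near hy one_lt_two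
  have hle := hW.measure_ball_le_half_pow ω hε0 (j := n) (by
    rwa [← le_div_iff₀ (by positivity), one_div])
  calc (W (Metric.ball ω ε)).toReal ≤ ((1 / 2 : ℝ≥0∞) ^ 2 ^ n).toReal :=
        ENNReal.toReal_mono (by simp) hle
    _ = (1 / 2) ^ 2 ^ n := by simp
    _ = Real.exp (-(Real.log 2 * 2 ^ n)) := by rw [half_pow_eq_exp]; push_cast; rfl
    _ ≤ _ := by
        refine Real.exp_le_exp.2 (neg_le_neg ?_)
        rw [Real.rpow_neg hε0.le, Real.rpow_two]
        rw [mul_inv, pow_succ (2 : ℝ)] at hn2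
        have h1 : (ε ^ 2)⁻¹ / 128 ≤ 2 ^ n := by linarith
        have h2 := mul_le_mul_of_nonneg_left h1 (Real.log_pos one_lt_two).le
        linarith

/-- The law of a linear combination of grid increments under the Wiener measure. -/
lemma IsWienerMeasure.map_sum_increments {W : Measure PathSpace} (hW : IsWienerMeasure W)
    {n : ℕ} (hn : 0 < n) (x : Fin n → ℝ) :
    Measure.map (fun ω : PathSpace =>
        ∑ i : Fin n, x i * (ω.1 (gridPt n (i + 1)) - ω.1 (gridPt n i))) W =
      ProbabilityTheory.gaussianReal 0 (Real.toNNReal (1 / n * ∑ i, x i ^ 2)) := by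
  have h := IsGaussianProcess.map_sum hW (κ := Fin n × Bool)
    (fun p => if p.2 then gridPt n (p.1 + 1) else gridPt n p.1)
    (fun p => if p.2 then x p.1 else -x p.1)
  have hn0 : (0 : ℝ) < n := by exact_mod_cast hn
  have hg : ∀ i : Fin n, (gridPt n i : ℝ) = i / n := fun i => coe_gridPt i.2.le
  have hg1 : ∀ i : Fin n, (gridPt n (i + 1) : ℝ) = (i + 1) / n := fun i => by
    rw [coe_gridPt (by omega)]; push_cast; rfl
  have hmin : ∀ a b : ℝ, min (a / n) (b / n) = min a b / n := fun a b =>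
    (min_div_div_right hn0.le a b)
  simp only [Fintype.sum_prod_type, Fintype.sum_bool, if_true, Bool.false_eq_true, if_false] at h
  convert h using 2
  · ext ω
    refine Finset.sum_congr rfl fun i _ => ?_
    ring
  · congr 1
    rw [Finset.mul_sum]
    refine Finset.sum_congr rfl fun i _ => ?_
    rw [← Finset.sum_add_distrib, Finset.sum_eq_single i]
    · rw [hg, hg1]
      simp only [hmin]
      have h1 : min (i + 1 : ℝ) i = i := min_eq_right (by linarith)
      have h2 : min (i : ℝ) (i + 1) = i := min_eq_left (by linarith)
      rw [h1, h2, min_self, min_self]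
      field_simp
      ring
    · intro j _ hji
      rw [hg, hg1, hg, hg1]
      simp only [hmin]
      rcases lt_or_gt_of_ne hji with h' | h'
      · have h3 : ((j : ℕ) : ℝ) + 1 ≤ i := by exact_mod_cast h'
        rw [min_eq_right (by linarith), min_eq_right (by linarith), min_eq_right (by linarith),
          min_eq_right (by linarith)]
        ring
      · have h3 : ((i : ℕ) : ℝ) + 1 ≤ j := by exact_mod_cast h'
        rw [min_eq_left (by linarith), min_eq_left (by linarith), min_eq_left (by linarith),
          min_eq_left (by linarith)]
        ring
    · simp

lemma Qvar_sq (ω : PathSpace) (n : ℕ) :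
    Qvar ω n ^ 2 = 1 / n *
      ∑ i ∈ Finset.range n, (ω.1 (gridPt n (i + 1)) - ω.1 (gridPt n i)) ^ 2 := by
  rw [Qvar, Real.sq_sqrt]
  exact mul_nonneg (by positivity) (Finset.sum_nonneg fun i _ => sq_nonneg _)

lemma Qvar_nonneg (ω : PathSpace) (n : ℕ) : 0 ≤ Qvar ω n := Real.sqrt_nonneg _

lemma IsWienerMeasure.measure_ball_le_exp_Qvar {W : Measure PathSpace} (hW : IsWienerMeasure W)
    (ωb : PathSpace) {ε : ℝ} (hε : 0 < ε) {n : ℕ} (hn : 0 < n) (hQ : 4 * ε ≤ Qvar ωb n) :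
    (W (Metric.ball ωb ε)).toReal ≤ Real.exp (-((n * Qvar ωb n) ^ 2 / 8)) := by
  have hn0 : (0 : ℝ) < n := by exact_mod_cast hn
  set Q := Qvar ωb n with hQd
  have hQ0 : 0 < Q := by linarith
  set x : Fin n → ℝ := fun i => ωb.1 (gridPt n (i + 1)) - ωb.1 (gridPt n i) with hx
  have hxQ : ∑ i, x i ^ 2 = n * Q ^ 2 := by
    rw [hQd, Qvar_sq, ← Fin.sum_univ_eq_sum_range
      (fun i => (ωb.1 (gridPt n (i + 1)) - ωb.1 (gridPt n i)) ^ 2)]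
    field_simp
    rfl
  have hcs : ∑ i, |x i| ≤ n * Q := by
    refine abs_le_of_sq_le_sq' ?_ (by positivity) |>.2
    have := sq_sum_le_card_mul_sum_sq (s := (Finset.univ : Finset (Fin n))) (f := fun i => |x i|)
    simp only [sq_abs, Finset.card_univ, Fintype.card_fin, hxQ] at this
    linarith
  set L : PathSpace → ℝ := fun ω =>
    ∑ i : Fin n, x i * (ω.1 (gridPt n (i + 1)) - ω.1 (gridPt n i)) with hL
  have hLm : Measurable L := by
    have : Continuous L := by fun_prop
    exact this.measurable
  have hsub : Metric.ball ωb ε ⊆ L ⁻¹' Ici (n * Q ^ 2 / 2) := by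
    intro ω hω
    have hterm : ∀ i : Fin n, x i ^ 2 - |x i| * (2 * ε) ≤
        x i * (ω.1 (gridPt n (i + 1)) - ω.1 (gridPt n i)) := by
      intro i
      have h1 := (abs_sub_lt_of_mem_ball hω (gridPt n (i + 1))).le
      have h2 := (abs_sub_lt_of_mem_ball hω (gridPt n i)).le
      set y := ω.1 (gridPt n (i + 1)) - ω.1 (gridPt n i) with hy
      have h3 : |y - x i| ≤ 2 * ε := by
        rw [abs_le] at h1 h2 ⊢
        simp only [hx, hy]
        constructor <;> linarith [h1.1, h1.2, h2.1, h2.2]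
      have h4 : |x i * (y - x i)| ≤ |x i| * (2 * ε) := by
        rw [abs_mul]; exact mul_le_mul_of_nonneg_left h3 (abs_nonneg _)
      have := (abs_le.1 h4).1
      nlinarith
    have := Finset.sum_le_sum fun i (_ : i ∈ Finset.univ) => hterm i
    rw [Finset.sum_sub_distrib, hxQ, ← Finset.sum_mul] at this
    simp only [mem_preimage, mem_Ici, hL]
    have h5 : (∑ i, |x i|) * (2 * ε) ≤ n * Q * (Q / 2) :=
      mul_le_mul hcs (by linarith) (by linarith) (by positivity)
    linarith
  have hv : 1 / (n : ℝ) * ∑ i, x i ^ 2 = Q ^ 2 := by rw [hxQ]; field_simp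
  refine ENNReal.toReal_le_of_le_ofReal (Real.exp_pos _).le ?_
  calc W (Metric.ball ωb ε) ≤ W (L ⁻¹' Ici (n * Q ^ 2 / 2)) := measure_mono hsub
    _ = Measure.map L W (Ici (n * Q ^ 2 / 2)) := (Measure.map_apply hLm measurableSet_Ici).symm
    _ = ProbabilityTheory.gaussianReal 0 (Real.toNNReal (Q ^ 2)) (Ici (n * Q ^ 2 / 2)) := by
        rw [hL, hW.map_sum_increments hn x, hv]
    _ ≤ _ := gaussianReal_Ici_le _ (by positivity)
    _ = _ := by
        rw [Real.coe_toNNReal _ (by positivity)]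
        congr 2
        field_simp
        ring

lemma eventually_rpow_le_Qvar {α s : ℝ} (hα : 0 < α) (hs : α < s) {ω : PathSpace}
    (hl : oreyLower ω = (α : EReal)) (hu : oreyUpper ω = (α : EReal)) :
    ∀ᶠ n : ℕ in atTop, (n : ℝ) ^ (-s) ≤ Qvar ω n := by
  have h1 := eventually_lt_of_lt_liminf
    (show (0 : EReal) < oreyLower ω by rw [hl]; exact_mod_cast hα)
  have h2 := eventually_lt_of_limsup_lt
    (show oreyUpper ω < (s : EReal) by rw [hu]; exact_mod_cast hs)
  filter_upwards [h1, h2, eventually_gt_atTop 1] with n hn1 hn2 hn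
  have hn1' : (0 : ℝ) < -Real.log (Qvar ω n) / Real.log n := by exact_mod_cast hn1
  have hn2' : -Real.log (Qvar ω n) / Real.log n < s := by exact_mod_cast hn2
  have hlog : 0 < Real.log n := Real.log_pos (by exact_mod_cast hn)
  have hQ : 0 < Qvar ω n := by
    refine lt_of_le_of_ne (Qvar_nonneg ω n) fun h => ?_
    rw [← h, Real.log_zero] at hn1'
    simp at hn1'
  rw [div_lt_iff₀ hlog] at hn2'
  rw [← Real.log_le_log_iff (Real.rpow_pos_of_pos (by positivity) _) hQ,
    Real.log_rpow (by positivity)]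
  linarith

lemma IsWienerMeasure.le_lowerLocOrd_of_rpow_le_Qvar {W : Measure PathSpace}
    (hW : IsWienerMeasure W) {s : ℝ} (hs : 0 < s) (hs1 : s < 1) {ω : PathSpace}
    (h : ∀ᶠ n : ℕ in atTop, (n : ℝ) ^ (-s) ≤ Qvar ω n) :
    (((2 - 2 * s) / s : ℝ) : EReal) ≤ lowerLocOrd W ω := by
  obtain ⟨N, hN⟩ := eventually_atTop.1 h
  refine le_lowerLocOrd (C := (4 ^ (-(1 / s)) / 2) ^ (2 - 2 * s) / 8) (by positivity)
    (fun ε hε => hW.measure_ball_pos ω hε) ?_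
  have hbig : Tendsto (fun ε : ℝ => (4 : ℝ) ^ (-(1 / s)) * ε ^ (-(1 / s))) (𝓝[>] 0) atTop :=
    (tendsto_rpow_neg_nhdsGT_zero (neg_neg_of_pos (by positivity))).const_mul_atTop (by positivity)
  filter_upwards [hbig.eventually_ge_atTop (N + 2), self_mem_nhdsWithin] with ε hε hε0
  have hε0 : 0 < ε := hε0
  set y := (4 : ℝ) ^ (-(1 / s)) * ε ^ (-(1 / s)) with hy
  have hy0 : 0 < y := by positivity
  set n := ⌊y⌋₊ with hnd
  have hny : (n : ℝ) ≤ y := Nat.floor_le hy0.le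
  have hny' : y < n + 1 := Nat.lt_floor_add_one y
  have hNn : N + 1 ≤ n := Nat.le_floor (by push_cast; linarith)
  have hn2 : (1 : ℝ) ≤ n := by exact_mod_cast (by omega : 1 ≤ n)
  have hyn : y / 2 ≤ n := by linarith
  have hys : y ^ (-s) = 4 * ε := by
    rw [hy, ← Real.mul_rpow (by norm_num) hε0.le, ← Real.rpow_mul (by positivity)]
    rw [show -(1 / s) * -s = 1 by field_simp, Real.rpow_one]
  have hQ := hN n (by omega)
  have hQε : 4 * ε ≤ Qvar ω n := by
    rw [← hys]
    exact (Real.rpow_le_rpow_of_nonpos (by linarith) hny (by linarith)).trans hQ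
  refine (hW.measure_ball_le_exp_Qvar ω hε0 (by omega) hQε).trans
    (Real.exp_le_exp.2 (neg_le_neg ?_))
  have hn0 : (0 : ℝ) < n := by linarith
  have h1 : (n : ℝ) ^ (1 - s) ≤ n * Qvar ω n := by
    rw [sub_eq_add_neg, Real.rpow_add hn0, Real.rpow_one]
    gcongr
  have h2 : ((n : ℝ) ^ (1 - s)) ^ 2 = (n : ℝ) ^ (2 - 2 * s) := by
    rw [← Real.rpow_mul_natCast hn0.le]
    congr 1
    push_cast; ring
  calc (4 ^ (-(1 / s)) / 2) ^ (2 - 2 * s) / 8 * ε ^ (-((2 - 2 * s) / s))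
      = (y / 2) ^ (2 - 2 * s) / 8 := by
        rw [hy, mul_div_right_comm, Real.mul_rpow (by positivity) (by positivity),
          ← Real.rpow_mul hε0.le]
        rw [show -(1 / s) * (2 - 2 * s) = -((2 - 2 * s) / s) by ring]
        ring
    _ ≤ (n : ℝ) ^ (2 - 2 * s) / 8 := by
        have : 0 ≤ 2 - 2 * s := by linarith
        gcongr
    _ ≤ (n * Qvar ω n) ^ 2 / 8 := by
        rw [← h2]
        gcongr

lemma tendsto_two_sub_div {α : ℝ} (hα : 0 < α) :
    Tendsto (fun s : ℝ => (((2 - 2 * s) / s : ℝ) : EReal)) (𝓝 α)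
      (𝓝 ((2 * (α⁻¹ - 1) : ℝ) : EReal)) := by
  refine (continuous_coe_real_ereal.tendsto _).comp ?_
  have : 2 * (α⁻¹ - 1) = (2 - 2 * α) / α := by field_simp
  rw [this]
  have hc : ContinuousAt (fun s : ℝ => (2 - 2 * s) / s) α := by
    refine ContinuousAt.div (by fun_prop) (by fun_prop) hα.ne'
  exact hc

lemma IsWienerMeasure.locOrd_of_mem_holderCrit {W : Measure PathSpace} (hW : IsWienerMeasure W)
    {α : ℝ} (hα : α ∈ Ioo (0 : ℝ) (1 / 2)) {ωb : PathSpace} (h : ωb ∈ holderCrit α) :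
    lowerLocOrd W ωb = ((2 * (α⁻¹ - 1) : ℝ) : EReal) ∧
      upperLocOrd W ωb = ((2 * (α⁻¹ - 1) : ℝ) : EReal) := by
  obtain ⟨hm, hl, hu⟩ := h
  have h1 : ((2 * (α⁻¹ - 1) : ℝ) : EReal) ≤ lowerLocOrd W ωb := by
    refine le_of_tendsto ((tendsto_two_sub_div hα.1).mono_left nhdsWithin_le_nhds)
      (?_ : ∀ᶠ s in 𝓝[>] α, _)
    filter_upwards [Ioo_mem_nhdsGT (show α < 1 by linarith [hα.2])] with s hs
    exact hW.le_lowerLocOrd_of_rpow_le_Qvar (hα.1.trans hs.1) hs.2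
      (eventually_rpow_le_Qvar hα.1 hs.1 hl hu)
  have h2 : upperLocOrd W ωb ≤ ((2 * (α⁻¹ - 1) : ℝ) : EReal) := by
    refine ge_of_tendsto ((tendsto_two_sub_div hα.1).mono_left nhdsWithin_le_nhds)
      (?_ : ∀ᶠ s in 𝓝[<] α, _)
    filter_upwards [Ioo_mem_nhdsLT hα.1] with s hs
    refine hW.upperLocOrd_le_of_mem_holderSet hs.1 (hs.2.trans hα.2) ?_
    exact mem_iInter₂.1 hm s hs
  have h3 := lowerLocOrd_le_upperLocOrd W ωb
  exact ⟨le_antisymm (h3.trans h2) h1, le_antisymm h2 (h1.trans h3)⟩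

lemma IsWienerMeasure.isLeast_range_lowerLocOrd {W : Measure PathSpace} (hW : IsWienerMeasure W) :
    IsLeast (Set.range (lowerLocOrd W)) (2 : EReal) := by
  refine ⟨⟨⟨0, rfl⟩, le_antisymm ?_ (hW.two_le_lowerLocOrd _)⟩, ?_⟩
  · have ht := tendsto_two_sub_div (α := 1 / 2) (by norm_num)
    have : ((2 * ((1 / 2 : ℝ)⁻¹ - 1) : ℝ) : EReal) = 2 := by norm_num; rfl
    rw [this] at ht
    refine ge_of_tendsto (ht.mono_left nhdsWithin_le_nhds) (?_ : ∀ᶠ s in 𝓝[<] (1 / 2 : ℝ), _)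
    filter_upwards [Ioo_mem_nhdsLT (show (0 : ℝ) < 1 / 2 by norm_num)] with s hs
    refine (lowerLocOrd_le_upperLocOrd _ _).trans
      (hW.upperLocOrd_le_of_mem_holderSet hs.1 hs.2 ⟨0, fun x y => by simp⟩)
  · rintro _ ⟨ω, rfl⟩
    exact hW.two_le_lowerLocOrd ω

/-! ### Upper bound for the Hausdorff order -/

lemma hMeas_ne_top_of_finite_covers {X : Type*} [MetricSpace X] {h : ℝ → ℝ} {A : Set X}
    {E : ℕ → Set X} (hA : A ⊆ ⋃ N, E N)
    (hcov : ∀ N, ∀ δ > 0, ∀ τ > 0, ∃ (r : ℝ) (F : Finset X), 0 < r ∧ r ≤ δ ∧ F.Nonempty ∧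
      E N ⊆ ⋃ c ∈ F, Metric.ball c r ∧ F.card * h r ≤ τ) :
    hMeas h A ≠ ∞ := by
  refine ne_top_of_le_ne_top ENNReal.one_ne_top (iSup₂_le fun δ hδ => ?_)
  obtain ⟨τ, hτ0, hτ⟩ := ENNReal.exists_pos_sum_of_countable one_ne_zero ℕ
  have hδ' : 0 < (min δ 1).toReal :=
    ENNReal.toReal_pos (lt_min hδ one_pos).ne' (ne_top_of_le_ne_top ENNReal.one_ne_top
      (min_le_right _ _))
  choose r F hr0 hrδ hF hE hcard using fun N => hcov N _ hδ' (τ N) (hτ0 N)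
  have : Infinite (Σ N, F N) :=
    Infinite.of_injective (fun N => (⟨N, (hF N).choose, (hF N).choose_spec⟩ : Σ N, F N))
      fun a b hab => congrArg Sigma.fst hab
  obtain ⟨_⟩ := nonempty_denumerable (Σ N, F N)
  let e := Denumerable.eqv (Σ N, F N)
  refine iInf₂_le_of_le (fun n => ((e.symm n).2 : X)) (fun n => r (e.symm n).1) ?_
  refine iInf₂_le_of_le (fun n => ⟨hr0 _, ?_⟩) ?_ ?_
  · refine (ENNReal.ofReal_le_ofReal (hrδ _)).trans ?_
    rw [ENNReal.ofReal_toReal (ne_top_of_le_ne_top ENNReal.one_ne_top (min_le_right _ _))]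
    exact min_le_left _ _
  · intro x hx
    obtain ⟨N, hN⟩ := mem_iUnion.1 (hA hx)
    obtain ⟨c, hc, hxc⟩ := mem_iUnion₂.1 (hE N hN)
    refine mem_iUnion.2 ⟨e ⟨N, c, hc⟩, ?_⟩
    beta_reduce
    rw [Equiv.symm_apply_apply]
    exact hxc
  · rw [Equiv.tsum_eq e.symm (fun p : Σ N, F N => ENNReal.ofReal (h (r p.1))),
      ENNReal.tsum_sigma']
    refine le_trans (ENNReal.tsum_le_tsum fun N => ?_) hτ.le
    rw [tsum_fintype]
    dsimp only
    rw [Finset.sum_const, Finset.card_univ, Fintype.card_coe, nsmul_eq_mul,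
      ← ENNReal.ofReal_natCast, ← ENNReal.ofReal_mul (by positivity)]
    exact (ENNReal.ofReal_le_ofReal (hcard N)).trans (by simp)

lemma abs_sub_le_of_grid {f g : unitInterval → ℝ} {n : ℕ} (hn : 0 < n) {a b : ℝ}
    (hf : ∀ x y : unitInterval, |(x : ℝ) - y| ≤ (n : ℝ)⁻¹ → |f x - f y| ≤ a)
    (hg : ∀ x y : unitInterval, |(x : ℝ) - y| ≤ (n : ℝ)⁻¹ → |g x - g y| ≤ a)
    (hfg : ∀ i ≤ n, |f (gridPt n i) - g (gridPt n i)| ≤ b) (t : unitInterval) :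
    |f t - g t| ≤ b + 2 * a := by
  have hn0 : (0 : ℝ) < n := by exact_mod_cast hn
  have ht0 : (0 : ℝ) ≤ t * n := mul_nonneg t.2.1 hn0.le
  have h1 : ((⌊(t : ℝ) * n⌋₊ : ℕ) : ℝ) ≤ t * n := Nat.floor_le ht0
  have h2 : (t : ℝ) * n < ⌊(t : ℝ) * n⌋₊ + 1 := Nat.lt_floor_add_one _
  have hi : ⌊(t : ℝ) * n⌋₊ ≤ n := by
    have : (t : ℝ) * n ≤ n := by nlinarith [t.2.2]
    exact_mod_cast h1.trans this
  have hd : |(t : ℝ) - gridPt n ⌊(t : ℝ) * n⌋₊| ≤ (n : ℝ)⁻¹ := by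
    rw [coe_gridPt hi, show (t : ℝ) - (⌊(t : ℝ) * n⌋₊ : ℝ) / n = (t * n - ⌊(t : ℝ) * n⌋₊) * (n : ℝ)⁻¹ by
      field_simp, abs_mul, abs_of_nonneg (by linarith), abs_of_pos (by positivity)]
    exact mul_le_of_le_one_left (by positivity) (by linarith)
  have h3 := abs_le.1 (hf _ _ hd)
  have h4 := abs_le.1 (hg _ _ hd)
  have h5 := abs_le.1 (hfg _ hi)
  rw [abs_le]
  constructor <;> linarith [h3.1, h3.2, h4.1, h4.2, h5.1, h5.2]

/-- The paths that are `β`-Hölder with constant `K`. -/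
def holderBall (β K : ℝ) : Set PathSpace :=
  {ω | ∀ x y : unitInterval, |ω.1 x - ω.1 y| ≤ K * |(x : ℝ) - y| ^ β}

lemma exists_cover_holderBall {β K : ℝ} (hβ : 0 < β) (hβ1 : β ≤ 1) (hK : 1 ≤ K) {n : ℕ}
    (hn : 0 < n) :
    ∃ F : Finset PathSpace, F.Nonempty ∧ F.card ≤ (2 * n + 5) ^ (n + 1) ∧
      holderBall β K ⊆ ⋃ c ∈ F, Metric.ball c (4 * K * (n : ℝ) ^ (-β)) := by
  have hn0 : (0 : ℝ) < n := by exact_mod_cast hn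
  have hn1 : (1 : ℝ) ≤ n := by exact_mod_cast hn
  set ε := K * (n : ℝ) ^ (-β) with hε
  have hε0 : 0 < ε := by positivity
  set code : PathSpace → Fin (n + 1) → ℤ := fun ω i => ⌊ω.1 (gridPt n i) / ε⌋ with hcode
  set S : Finset (Fin (n + 1) → ℤ) :=
    Fintype.piFinset fun _ => Finset.Icc (-(n + 2 : ℤ)) (n + 2) with hS
  have hne : (holderBall β K).Nonempty := ⟨⟨0, rfl⟩, fun x y => by
    simp only [ContinuousMap.zero_apply, sub_self, abs_zero]; positivity⟩
  have : Nonempty PathSpace := ⟨hne.some⟩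
  set rep : (Fin (n + 1) → ℤ) → PathSpace := Function.invFunOn code (holderBall β K) with hrep
  have hSne : S.Nonempty := ⟨fun _ => 0, by
    rw [hS, Fintype.mem_piFinset]; intro i; rw [Finset.mem_Icc]; constructor <;> omega⟩
  classical
  refine ⟨S.image rep, hSne.image _, Finset.card_image_le.trans ?_, fun ω hω => ?_⟩
  · rw [hS, Fintype.card_piFinset_const, Int.card_Icc]
    refine Nat.pow_le_pow_left ?_ _
    omega
  have hosc : ∀ ω ∈ holderBall β K, ∀ x y : unitInterval, |(x : ℝ) - y| ≤ (n : ℝ)⁻¹ →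
      |ω.1 x - ω.1 y| ≤ ε := fun ω hω x y hxy => (hω x y).trans (by
    rw [hε, Real.rpow_neg hn0.le, ← Real.inv_rpow hn0.le]
    exact mul_le_mul_of_nonneg_left (Real.rpow_le_rpow (abs_nonneg _) hxy hβ.le) (by linarith))
  have hmem : rep (code ω) ∈ holderBall β K := Function.invFunOn_mem ⟨ω, hω, rfl⟩
  have heq : code (rep (code ω)) = code ω := Function.invFunOn_eq ⟨ω, hω, rfl⟩
  have hcS : code ω ∈ S := by
    rw [hS, Fintype.mem_piFinset]
    intro i
    have h1 : |ω.1 (gridPt n i)| ≤ K := by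
      have h2 := hω (gridPt n i) 0
      rw [ω.2, sub_zero] at h2
      refine h2.trans (mul_le_of_le_one_right (by linarith) (Real.rpow_le_one (abs_nonneg _) ?_ hβ.le))
      simp only [Icc.coe_zero, sub_zero]
      rw [abs_of_nonneg (gridPt n i).2.1]
      exact (gridPt n i).2.2
    have h3 : |ω.1 (gridPt n i) / ε| ≤ n := by
      rw [abs_div, abs_of_pos hε0, div_le_iff₀ hε0]
      refine h1.trans ?_
      have : (n : ℝ) ^ (-1 : ℝ) ≤ (n : ℝ) ^ (-β) :=
        Real.rpow_le_rpow_of_exponent_le hn1 (by linarith)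
      rw [Real.rpow_neg_one] at this
      have h4 : 1 ≤ (n : ℝ) * (n : ℝ) ^ (-β) := by
        calc (1 : ℝ) = n * (n : ℝ)⁻¹ := by field_simp
          _ ≤ _ := by gcongr
      calc K ≤ K * ((n : ℝ) * (n : ℝ) ^ (-β)) := le_mul_of_one_le_right (by linarith) h4
        _ = n * ε := by rw [hε]; ring
    rw [Finset.mem_Icc]
    rw [abs_le] at h3
    constructor
    · refine Int.le_floor.2 ?_
      push_cast
      linarith [h3.1]
    · refine Int.le_of_lt_add_one (Int.floor_lt.2 ?_)
      push_cast
      linarith [h3.2]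
  refine mem_iUnion₂.2 ⟨rep (code ω), Finset.mem_image_of_mem _ hcS, ?_⟩
  refine mem_ball_of_forall_le (r := ε + 2 * ε) (by positivity) (by
    rw [mul_assoc, ← hε]; linarith) fun t => ?_
  refine abs_sub_le_of_grid hn (hosc ω hω) (hosc _ hmem) (fun i hi => ?_) t
  have h5 := congrFun heq ⟨i, by omega⟩
  simp only [hcode] at h5
  have h6 := Int.abs_sub_lt_one_of_floor_eq_floor h5
  rw [← sub_div, abs_div, abs_of_pos hε0, div_lt_one hε0, abs_sub_comm] at h6
  exact h6.le

lemma tendsto_pow_mul_exp_neg_rpow {c p : ℝ} (hc : 0 < c) (hp : 1 < p) :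
    Tendsto (fun n : ℕ => ((2 * n + 5 : ℕ) : ℝ) ^ (n + 1) * Real.exp (-(c * (n : ℝ) ^ p))) atTop
      (𝓝 0) := by
  set s := (p - 1) / 2 with hs
  have hs0 : 0 < s := by linarith [hs]
  have h1 : Tendsto (fun n : ℕ => (n : ℝ) ^ s) atTop atTop :=
    (tendsto_rpow_atTop hs0).comp tendsto_natCast_atTop_atTop
  have hupper : ∀ᶠ n : ℕ in atTop, ((2 * n + 5 : ℕ) : ℝ) ^ (n + 1) * Real.exp (-(c * (n : ℝ) ^ p)) ≤
      Real.exp (-(n : ℝ)) := by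
    filter_upwards [h1.eventually_ge_atTop ((2 * 7 ^ s / s + 1) / c), eventually_ge_atTop 1]
      with n hn hn1
    have hn1' : (1 : ℝ) ≤ n := by exact_mod_cast hn1
    have hn0 : (0 : ℝ) < n := by linarith
    have hb0 : (0 : ℝ) < ((2 * n + 5 : ℕ) : ℝ) := by positivity
    rw [← Real.exp_log hb0, ← Real.exp_nat_mul, ← Real.exp_add]
    refine Real.exp_le_exp.2 ?_
    have hlog : Real.log ((2 * n + 5 : ℕ) : ℝ) ≤ (7 * n) ^ s / s := by
      refine le_trans (Real.log_le_rpow_div hb0.le hs0) ?_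
      gcongr
      push_cast
      linarith
    rw [Real.mul_rpow (by norm_num) hn0.le] at hlog
    have hns : 1 ≤ (n : ℝ) ^ s := Real.one_le_rpow hn1' hs0.le
    have hpp : (n : ℝ) ^ p = n * (n : ℝ) ^ s * (n : ℝ) ^ s := by
      rw [show p = 1 + s + s by rw [hs]; ring, Real.rpow_add hn0, Real.rpow_add hn0, Real.rpow_one]
    rw [div_le_iff₀ hc] at hn
    have h3 : ((n + 1 : ℕ) : ℝ) * Real.log ((2 * n + 5 : ℕ) : ℝ) ≤
        2 * n * (7 ^ s * (n : ℝ) ^ s / s) := by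
      refine mul_le_mul ?_ hlog (Real.log_nonneg ?_) (by positivity)
      · push_cast; linarith
      · push_cast; linarith
    have h4 : n * (n : ℝ) ^ s * (2 * 7 ^ s / s + 1) ≤ n * (n : ℝ) ^ s * ((n : ℝ) ^ s * c) :=
      mul_le_mul_of_nonneg_left hn (by positivity)
    have h5 : (n : ℝ) ≤ n * (n : ℝ) ^ s := le_mul_of_one_le_right hn0.le hns
    rw [hpp]
    have h6 : 2 * n * (7 ^ s * (n : ℝ) ^ s / s) = n * (n : ℝ) ^ s * (2 * 7 ^ s / s) := by ring
    nlinarith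
  refine tendsto_of_tendsto_of_tendsto_of_le_of_le' tendsto_const_nhds
    (Real.tendsto_exp_neg_atTop_nhds_zero.comp tendsto_natCast_atTop_atTop)
    (Eventually.of_forall fun n => by positivity) hupper

lemma hMeas_holderCrit_ne_top {α γ : ℝ} (hα : 0 < α) (hα1 : α ≤ 1) (hγ : α⁻¹ < γ) :
    hMeas (fun ε : ℝ => Real.exp (-(ε ^ (-γ)))) (holderCrit α) ≠ ∞ := by
  have hγ0 : 0 < γ := (inv_pos.2 hα).trans hγ
  obtain ⟨β, hβ1, hβ2⟩ := exists_between (inv_lt_of_inv_lt₀ hα hγ)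
  have hβ0 : 0 < β := (inv_pos.2 hγ0).trans hβ1
  have hp : 1 < β * γ := by
    rw [inv_lt_iff_one_lt_mul₀ hγ0] at hβ1
    linarith
  refine hMeas_ne_top_of_finite_covers (E := fun N : ℕ => holderBall β (N + 1)) ?_ ?_
  · intro ω hω
    obtain ⟨K, hK0, hK⟩ := exists_nonneg_of_mem_holderSet (mem_iInter₂.1 hω.1 β ⟨hβ0, hβ2⟩)
    obtain ⟨N, hN⟩ := exists_nat_ge K
    refine mem_iUnion.2 ⟨N, fun x y => (hK x y).trans ?_⟩
    exact mul_le_mul_of_nonneg_right (by linarith) (by positivity)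
  · intro N δ hδ τ hτ
    have hK0 : (0 : ℝ) < 4 * (N + 1) := by positivity
    have h1 : Tendsto (fun n : ℕ => 4 * (N + 1 : ℝ) * (n : ℝ) ^ (-β)) atTop (𝓝 (4 * (N + 1) * 0)) :=
      ((tendsto_rpow_neg_atTop hβ0).comp tendsto_natCast_atTop_atTop).const_mul _
    rw [mul_zero] at h1
    have h2 := tendsto_pow_mul_exp_neg_rpow (c := (4 * (N + 1 : ℝ)) ^ (-γ)) (by positivity) hp
    obtain ⟨n, hn1, hn2, hn3⟩ := ((h1.eventually (gt_mem_nhds hδ)).and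
      ((h2.eventually (gt_mem_nhds hτ)).and (eventually_ge_atTop 1))).exists
    obtain ⟨F, hF, hcard, hcov⟩ := exists_cover_holderBall hβ0 (hβ2.le.trans hα1)
      (K := N + 1) (by linarith [(Nat.cast_nonneg N : (0 : ℝ) ≤ N)]) hn3
    have hn0 : (0 : ℝ) < n := by exact_mod_cast hn3
    refine ⟨_, F, by positivity, hn1.le, hF, hcov, le_trans ?_ hn2.le⟩
    have h3 : (4 * (N + 1 : ℝ) * (n : ℝ) ^ (-β)) ^ (-γ) =
        (4 * (N + 1 : ℝ)) ^ (-γ) * (n : ℝ) ^ (β * γ) := by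
      rw [Real.mul_rpow hK0.le (by positivity), ← Real.rpow_mul hn0.le, neg_mul_neg]
    rw [h3]
    refine mul_le_mul_of_nonneg_right ?_ (Real.exp_pos _).le
    exact_mod_cast hcard

lemma ordH_holderCrit_le {α : ℝ} (hα : 0 < α) (hα1 : α ≤ 1) :
    ordH (holderCrit α) ≤ ENNReal.ofReal α⁻¹ := by
  refine iSup₂_le fun γ hγ => ENNReal.ofReal_le_ofReal ?_
  by_contra h
  exact hMeas_holderCrit_ne_top hα hα1 (not_le.1 h) hγ.2

/-! ### Critical paths with prescribed signs -/

/-- The sign encoded by a boolean. -/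
def boolSign (b : Bool) : ℝ := if b then 1 else -1

lemma abs_boolSign (b : Bool) : |boolSign b| = 1 := by
  cases b <;> simp [boolSign]

/-- A chain of unit tents over the intervals `[k, k + 1]` with signs given by `s`. -/
def tentWave (s : ℕ → Bool) (x : ℝ) : ℝ :=
  boolSign (s ⌊x⌋₊) * (1 - |2 * (x - ⌊x⌋₊) - 1|)

lemma tentWave_natCast (s : ℕ → Bool) (m : ℕ) : tentWave s m = 0 := by
  simp [tentWave]

lemma tentWave_left (s : ℕ → Bool) {m : ℕ} {x : ℝ} (h1 : (m : ℝ) ≤ x) (h2 : x ≤ m + 1 / 2) :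
    tentWave s x = boolSign (s m) * (2 * (x - m)) := by
  have hf : ⌊x⌋₊ = m := by
    rw [Nat.floor_eq_iff ((Nat.cast_nonneg m).trans h1)]
    exact ⟨h1, by linarith⟩
  rw [tentWave, hf, abs_of_nonpos (by linarith)]
  ring

lemma tentWave_right (s : ℕ → Bool) {m : ℕ} {x : ℝ} (h1 : (m : ℝ) + 1 / 2 ≤ x)
    (h2 : x ≤ m + 1) : tentWave s x = boolSign (s m) * (2 * (m + 1 - x)) := by
  rcases h2.eq_or_lt with rfl | h2
  · have := tentWave_natCast s (m + 1)
    push_cast at this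
    rw [this]
    simp
  · have hf : ⌊x⌋₊ = m := by
      rw [Nat.floor_eq_iff (by linarith [(Nat.cast_nonneg m : (0 : ℝ) ≤ m)])]
      exact ⟨by linarith, h2⟩
    rw [tentWave, hf, abs_of_nonneg (by linarith)]
    ring

lemma abs_tentWave_le (s : ℕ → Bool) {x : ℝ} (hx : 0 ≤ x) :
    |tentWave s x| ≤ 1 ∧ |tentWave s x| ≤ 2 * (x - ⌊x⌋₊) ∧
      |tentWave s x| ≤ 2 * (⌊x⌋₊ + 1 - x) := by
  have h1 := Nat.floor_le hx
  have h2 := Nat.lt_floor_add_one x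
  rw [tentWave, abs_mul, abs_boolSign, one_mul]
  have h3 : |2 * (x - ⌊x⌋₊) - 1| ≤ 1 := by rw [abs_le]; constructor <;> linarith
  have h4 := le_abs_self (2 * (x - ⌊x⌋₊) - 1)
  have h5 := neg_abs_le (2 * (x - ⌊x⌋₊) - 1)
  have h6 := abs_nonneg (2 * (x - ⌊x⌋₊) - 1)
  rw [abs_of_nonneg (by linarith)]
  refine ⟨?_, ?_, ?_⟩ <;> linarith

lemma abs_tentWave_sub_le (s : ℕ → Bool) {x y : ℝ} (hx : 0 ≤ x) (hy : 0 ≤ y) :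
    |tentWave s x - tentWave s y| ≤ 2 * |x - y| := by
  wlog hxy : x ≤ y generalizing x y
  · rw [abs_sub_comm, abs_sub_comm x]
    exact this hy hx (le_of_not_ge hxy)
  rcases (Nat.floor_mono hxy).eq_or_lt with hf | hf
  · rw [tentWave, tentWave, hf, ← mul_sub, abs_mul, abs_boolSign, one_mul]
    have := abs_abs_sub_abs_le (2 * (y - ⌊y⌋₊) - 1) (2 * (x - ⌊y⌋₊) - 1)
    calc _ = |(|2 * (y - ⌊y⌋₊) - 1| - |2 * (x - ⌊y⌋₊) - 1|)| := by congr 1; ring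
      _ ≤ _ := this
      _ = |2 * (y - x)| := by congr 1; ring
      _ = 2 * |x - y| := by rw [abs_mul, abs_sub_comm y]; norm_num
  · have hf' : ((⌊x⌋₊ : ℕ) : ℝ) + 1 ≤ ⌊y⌋₊ := by exact_mod_cast hf
    have h1 := (abs_tentWave_le s hx).2.2
    have h2 := (abs_tentWave_le s hy).2.1
    have h3 := abs_sub (tentWave s x) (tentWave s y)
    rw [abs_sub_comm x, abs_of_nonneg (by linarith : 0 ≤ y - x)]
    linarith

lemma abs_tentWave_sub_le_rpow (s : ℕ → Bool) {x y β : ℝ} (hx : 0 ≤ x) (hy : 0 ≤ y)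
    (hβ : 0 < β) (hβ1 : β ≤ 1) : |tentWave s x - tentWave s y| ≤ 2 * |x - y| ^ β := by
  rcases le_total |x - y| 1 with h | h
  · refine (abs_tentWave_sub_le s hx hy).trans ?_
    have := Real.rpow_le_rpow_of_exponent_ge' (abs_nonneg (x - y)) h hβ.le hβ1
    rw [Real.rpow_one] at this
    linarith
  · have h1 := (abs_tentWave_le s hx).1
    have h2 := (abs_tentWave_le s hy).1
    have h3 := abs_sub (tentWave s x) (tentWave s y)
    have h4 := Real.one_le_rpow h hβ.le
    linarith

/-- Dyadic dilations of tent waves are affine on dyadic intervals of smaller scale. -/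
lemma tentWave_midpoint (s : ℕ → Bool) (e k : ℕ) :
    tentWave s ((2 * k + 1 : ℕ) / 2 ^ (e + 2)) -
      (tentWave s ((k : ℕ) / 2 ^ (e + 1)) + tentWave s ((k + 1 : ℕ) / 2 ^ (e + 1))) / 2 = 0 := by
  have hp : (0 : ℝ) < 2 ^ e := by positivity
  set p := k / 2 ^ e with hpd
  have h1 : (p : ℝ) * 2 ^ e ≤ k := by exact_mod_cast Nat.div_mul_le_self k (2 ^ e)
  have h2 : (k : ℝ) + 1 ≤ (p + 1) * 2 ^ e := by
    have := Nat.lt_mul_of_div_lt (Nat.lt_succ_self (k / 2 ^ e)) (Nat.two_pow_pos e)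
    exact_mod_cast Nat.succ_le_of_lt this
  have e1 : ((2 * k + 1 : ℕ) : ℝ) / 2 ^ (e + 2) = (k + 1 / 2) / 2 ^ e / 2 := by
    push_cast; field_simp; ring
  have e2 : (k : ℝ) / 2 ^ (e + 1) = k / 2 ^ e / 2 := by field_simp; ring
  have e3 : ((k + 1 : ℕ) : ℝ) / 2 ^ (e + 1) = (k + 1) / 2 ^ e / 2 := by
    push_cast; field_simp; ring
  have b1 : (p : ℝ) ≤ k / 2 ^ e := by rwa [le_div_iff₀ hp]
  have b2 : ((k : ℝ) + 1) / 2 ^ e ≤ p + 1 := by rwa [div_le_iff₀ hp]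
  have b3 : (k : ℝ) / 2 ^ e ≤ (k + 1 / 2) / 2 ^ e := by gcongr; linarith
  have b4 : ((k : ℝ) + 1 / 2) / 2 ^ e ≤ (k + 1) / 2 ^ e := by gcongr; norm_num
  have b5 : ((k : ℝ) + 1 / 2) / 2 ^ e = (k / 2 ^ e + (k + 1) / 2 ^ e) / 2 := by field_simp; ring
  rw [e1, e2, e3]
  rcases Nat.even_or_odd' p with ⟨m, hm | hm⟩
  · have hm' : (p : ℝ) = 2 * m := by rw [hm]; push_cast; rfl
    rw [tentWave_left s (m := m) (by linarith) (by linarith),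
      tentWave_left s (m := m) (by linarith) (by linarith),
      tentWave_left s (m := m) (by linarith) (by linarith), b5]
    ring
  · have hm' : (p : ℝ) = 2 * m + 1 := by rw [hm]; push_cast; rfl
    rw [tentWave_right s (m := m) (by linarith) (by linarith),
      tentWave_right s (m := m) (by linarith) (by linarith),
      tentWave_right s (m := m) (by linarith) (by linarith), b5]
    ring

lemma secDiff_tentWave (s : ℕ → Bool) (i : ℕ) {j k : ℕ} (hk : k < 2 ^ j) :
    secDiff (fun t => tentWave s (2 ^ i * (t : ℝ))) j k = if i = j then boolSign (s k) else 0 := by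
  have e1 : ((gridPt (2 ^ (j + 1)) (2 * k + 1) : unitInterval) : ℝ) =
      (2 * k + 1 : ℕ) / 2 ^ (j + 1) := by
    rw [coe_gridPt (by rw [pow_succ]; omega)]; push_cast; rfl
  have e2 : ((gridPt (2 ^ j) k : unitInterval) : ℝ) = (k : ℕ) / 2 ^ j := by
    rw [coe_gridPt hk.le]; push_cast; rfl
  have e3 : ((gridPt (2 ^ j) (k + 1) : unitInterval) : ℝ) = (k + 1 : ℕ) / 2 ^ j := by
    rw [coe_gridPt hk]; push_cast; rfl
  rw [secDiff, e1, e2, e3]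
  rcases lt_trichotomy i j with h | rfl | h
  · rw [if_neg h.ne]
    obtain ⟨e, rfl⟩ := Nat.exists_eq_add_of_lt h
    have := tentWave_midpoint s e k
    convert this using 3
    · rw [show i + e + 1 + 1 = i + (e + 2) by ring, pow_add (2 : ℝ) i]; field_simp
    · congr 2
      · rw [show i + e + 1 = i + (e + 1) by ring, pow_add (2 : ℝ) i]; field_simp
      · rw [show i + e + 1 = i + (e + 1) by ring, pow_add (2 : ℝ) i]; field_simp
  · rw [if_pos rfl]
    have h1 : (2 : ℝ) ^ i * ((2 * k + 1 : ℕ) / 2 ^ (i + 1)) = k + 1 / 2 := by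
      push_cast; rw [pow_succ]; field_simp
    rw [h1, mul_div_cancel₀ _ (by positivity), mul_div_cancel₀ _ (by positivity),
      tentWave_natCast, tentWave_natCast, tentWave_left s (m := k) (by linarith) le_rfl]
    ring
  · rw [if_neg h.ne']
    obtain ⟨e, rfl⟩ := Nat.exists_eq_add_of_lt h
    have h1 : (2 : ℝ) ^ (j + e + 1) * ((2 * k + 1 : ℕ) / 2 ^ (j + 1)) =
        ((2 ^ e * (2 * k + 1) : ℕ) : ℝ) := by
      rw [show j + e + 1 = (j + 1) + e by ring, pow_add]; push_cast; field_simp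
    have h2 : ∀ m : ℕ, (2 : ℝ) ^ (j + e + 1) * (m / 2 ^ j) = ((2 ^ (e + 1) * m : ℕ) : ℝ) := by
      intro m
      rw [show j + e + 1 = j + (e + 1) by ring, pow_add]; push_cast; field_simp
    rw [h1, h2, h2, tentWave_natCast, tentWave_natCast, tentWave_natCast]
    simp

lemma two_rpow_neg_lt_one {α : ℝ} (hα : 0 < α) : (2 : ℝ) ^ (-α) < 1 :=
  Real.rpow_lt_one_of_one_lt_of_neg (by norm_num) (by linarith)

lemma abs_signSeries_term_le {α : ℝ} (s : ℕ → ℕ → Bool) (j : ℕ) (t : unitInterval) :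
    ‖((2 : ℝ) ^ (-α)) ^ j * tentWave (s j) (2 ^ j * (t : ℝ))‖ ≤ ((2 : ℝ) ^ (-α)) ^ j := by
  rw [norm_mul, Real.norm_of_nonneg (by positivity)]
  refine mul_le_of_le_one_right (by positivity) ?_
  exact (abs_tentWave_le _ (mul_nonneg (by positivity) t.2.1)).1

lemma summable_signSeries {α : ℝ} (hα : 0 < α) (s : ℕ → ℕ → Bool) (t : unitInterval) :
    Summable fun j => ((2 : ℝ) ^ (-α)) ^ j * tentWave (s j) (2 ^ j * (t : ℝ)) :=
  Summable.of_norm_bounded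
    (summable_geometric_of_lt_one (by positivity) (two_rpow_neg_lt_one hα))
    fun j => abs_signSeries_term_le s j t

lemma continuous_signSeries {α : ℝ} (hα : 0 < α) (s : ℕ → ℕ → Bool) :
    Continuous fun t : unitInterval =>
      ∑' j, ((2 : ℝ) ^ (-α)) ^ j * tentWave (s j) (2 ^ j * (t : ℝ)) := by
  refine continuous_tsum (fun j => continuous_const.mul ?_)
    (summable_geometric_of_lt_one (by positivity) (two_rpow_neg_lt_one hα))
    fun j t => abs_signSeries_term_le s j t
  refine (LipschitzWith.of_dist_le_mul (K := 2 * 2 ^ j) fun x y => ?_).continuous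
  rw [Real.dist_eq, Subtype.dist_eq, Real.dist_eq]
  refine (abs_tentWave_sub_le _ (mul_nonneg (by positivity) x.2.1)
    (mul_nonneg (by positivity) y.2.1)).trans (le_of_eq ?_)
  rw [← mul_sub, abs_mul, abs_of_pos (by positivity)]
  push_cast
  ring

/-- The path whose Faber-Schauder coefficients of generation `j` are `± 2 ^ (-α j)`, with signs
given by `s`. -/
def signPath (α : ℝ) (hα : 0 < α) (s : ℕ → ℕ → Bool) : PathSpace :=
  ⟨⟨_, continuous_signSeries hα s⟩, by
    have h : ∀ j, tentWave (s j) 0 = 0 := fun j => by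
      simpa using tentWave_natCast (s j) 0
    simp [h]⟩

lemma signPath_apply {α : ℝ} (hα : 0 < α) (s : ℕ → ℕ → Bool) (t : unitInterval) :
    (signPath α hα s).1 t = ∑' j, ((2 : ℝ) ^ (-α)) ^ j * tentWave (s j) (2 ^ j * (t : ℝ)) := rfl

lemma secDiff_signPath {α : ℝ} (hα : 0 < α) (s : ℕ → ℕ → Bool) {j k : ℕ} (hk : k < 2 ^ j) :
    secDiff (signPath α hα s).1 j k = boolSign (s j k) * ((2 : ℝ) ^ j) ^ (-α) := by
  have hs := fun t => (summable_signSeries hα s t).hasSum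
  have h1 := (hs (gridPt (2 ^ (j + 1)) (2 * k + 1))).sub
    (((hs (gridPt (2 ^ j) k)).add (hs (gridPt (2 ^ j) (k + 1)))).div_const 2)
  have h2 : HasSum (fun i => ((2 : ℝ) ^ (-α)) ^ i * if i = j then boolSign (s i k) else 0)
      (secDiff (signPath α hα s).1 j k) := by
    refine h1.congr_fun fun i => ?_
    rw [← secDiff_tentWave (s i) i hk, secDiff]
    ring
  have h3 : HasSum (fun i => ((2 : ℝ) ^ (-α)) ^ i * if i = j then boolSign (s i k) else 0)
      (((2 : ℝ) ^ (-α)) ^ j * boolSign (s j k)) := by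
    convert hasSum_ite_eq j (((2 : ℝ) ^ (-α)) ^ j * boolSign (s j k)) using 2 with i
    split_ifs with h
    · rw [h]
    · simp
  rw [h2.unique h3, mul_comm]
  congr 1
  rw [← Real.rpow_natCast, ← Real.rpow_natCast, ← Real.rpow_mul (by norm_num),
    ← Real.rpow_mul (by norm_num), mul_comm]

lemma signPath_mem_holderBall {α β : ℝ} (hβ : 0 < β) (hβα : β < α) (hβ1 : β ≤ 1)
    (s : ℕ → ℕ → Bool) : signPath α (hβ.trans hβα) s ∈ holderBall β (2 / (1 - 2 ^ (β - α))) := by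
  intro x y
  have hq : (2 : ℝ) ^ (β - α) < 1 :=
    Real.rpow_lt_one_of_one_lt_of_neg (by norm_num) (by linarith)
  have hg := (hasSum_geometric_of_lt_one (by positivity) hq).mul_left (2 * |(x : ℝ) - y| ^ β)
  rw [signPath_apply, signPath_apply, ← (summable_signSeries (hβ.trans hβα) s x).tsum_sub
    (summable_signSeries (hβ.trans hβα) s y), ← Real.norm_eq_abs]
  refine (tsum_of_norm_bounded hg fun j => ?_).trans (le_of_eq (by ring))
  rw [← mul_sub, norm_mul, Real.norm_of_nonneg (by positivity), Real.norm_eq_abs]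
  have h1 := abs_tentWave_sub_le_rpow (s j) (x := 2 ^ j * (x : ℝ)) (y := 2 ^ j * (y : ℝ))
    (mul_nonneg (by positivity) x.2.1) (mul_nonneg (by positivity) y.2.1) hβ hβ1
  rw [← mul_sub, abs_mul, abs_of_pos (by positivity : (0 : ℝ) < 2 ^ j),
    Real.mul_rpow (by positivity) (abs_nonneg _)] at h1
  refine (mul_le_mul_of_nonneg_left h1 (by positivity)).trans (le_of_eq ?_)
  have h2 : ((2 : ℝ) ^ (β - α)) ^ j = ((2 : ℝ) ^ (-α)) ^ j * ((2 : ℝ) ^ j) ^ β := by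
    rw [← Real.rpow_natCast, ← Real.rpow_natCast, ← Real.rpow_natCast, ← Real.rpow_mul (by norm_num),
      ← Real.rpow_mul (by norm_num), ← Real.rpow_mul (by norm_num), ← Real.rpow_add (by norm_num)]
    congr 1
    ring
  rw [h2]
  ring

/-! ### The Orey exponent of a path with prescribed signs -/

lemma abs_sub_le_of_mem_holderBall {β K : ℝ} (hβ : 0 < β) (hK : 0 ≤ K) {ω : PathSpace}
    (hω : ω ∈ holderBall β K) {n : ℕ} (hn : 0 < n) {x y : unitInterval}
    (hxy : |(x : ℝ) - y| ≤ (n : ℝ)⁻¹) : |ω.1 x - ω.1 y| ≤ K * (n : ℝ) ^ (-β) := by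
  have hn0 : (0 : ℝ) < n := by exact_mod_cast hn
  refine (hω x y).trans ?_
  rw [Real.rpow_neg hn0.le, ← Real.inv_rpow hn0.le]
  exact mul_le_mul_of_nonneg_left (Real.rpow_le_rpow (abs_nonneg _) hxy hβ.le) hK

lemma Qvar_le_of_mem_holderBall {β K : ℝ} (hβ : 0 < β) (hK : 0 ≤ K) {ω : PathSpace}
    (hω : ω ∈ holderBall β K) {n : ℕ} (hn : 0 < n) : Qvar ω n ≤ K * (n : ℝ) ^ (-β) := by
  have hn0 : (0 : ℝ) < n := by exact_mod_cast hn
  refine abs_le_of_sq_le_sq' ?_ (by positivity) |>.2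
  rw [Qvar_sq, div_mul_eq_mul_div, one_mul, div_le_iff₀ hn0]
  calc _ ≤ ∑ i ∈ Finset.range n, (K * (n : ℝ) ^ (-β)) ^ 2 := by
        refine Finset.sum_le_sum fun i hi => ?_
        rw [← sq_abs]
        refine pow_le_pow_left₀ (abs_nonneg _) (abs_sub_le_of_mem_holderBall hβ hK hω hn ?_) 2
        have hi := Finset.mem_range.1 hi
        rw [coe_gridPt hi, coe_gridPt hi.le, ← sub_div]
        push_cast
        rw [add_sub_cancel_left, abs_of_pos (by positivity), one_div]
    _ = _ := by rw [Finset.sum_const, Finset.card_range, nsmul_eq_mul, mul_comm]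

lemma sum_abs_increment_le (ω : PathSpace) {n : ℕ} (hn : 0 < n) :
    ∑ i ∈ Finset.range n, |ω.1 (gridPt n (i + 1)) - ω.1 (gridPt n i)| ≤ n * Qvar ω n := by
  have hn0 : (0 : ℝ) < n := by exact_mod_cast hn
  refine abs_le_of_sq_le_sq' ?_ (mul_nonneg hn0.le (Qvar_nonneg _ _)) |>.2
  refine sq_sum_le_card_mul_sum_sq.trans (le_of_eq ?_)
  rw [mul_pow, Qvar_sq]
  simp only [sq_abs, Finset.card_range]
  field_simp

lemma abs_sub_le_sum_sub_sum (u : ℕ → ℝ) {a b : ℕ} (hab : a ≤ b) :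
    |u b - u a| ≤ ∑ i ∈ Finset.range b, |u (i + 1) - u i| -
      ∑ i ∈ Finset.range a, |u (i + 1) - u i| := by
  rw [← Finset.sum_Ico_eq_sub _ hab, ← Finset.sum_Ico_sub u hab]
  exact Finset.abs_sum_le_sum_abs _ _

/-- Large second differences of one generation force a large discrete quadratic variation. -/
lemma two_pow_mul_le_of_le_abs_secDiff {β K a : ℝ} (hβ : 0 < β) (hK : 0 ≤ K) {ω : PathSpace}
    (hω : ω ∈ holderBall β K) {n : ℕ} (hn : 0 < n) {j : ℕ}
    (ha : ∀ k < 2 ^ j, a ≤ |secDiff ω.1 j k|) (hKa : 4 * (K * (n : ℝ) ^ (-β)) ≤ a) :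
    2 ^ j * a ≤ n * Qvar ω n := by
  have hn0 : (0 : ℝ) < n := by exact_mod_cast hn
  set η := K * (n : ℝ) ^ (-β)
  set N : ℕ → ℕ := fun p => n * p / 2 ^ (j + 1) with hN
  set u : ℕ → ℝ := fun i => ω.1 (gridPt n i) with hu
  set V : ℕ → ℝ := fun m => ∑ i ∈ Finset.range m, |u (i + 1) - u i| with hV
  have hNmono : ∀ {p q : ℕ}, p ≤ q → N p ≤ N q := fun h =>
    Nat.div_le_div_right (Nat.mul_le_mul_left _ h)
  have hNtop : N (2 ^ (j + 1)) = n := Nat.mul_div_cancel _ (Nat.two_pow_pos _)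
  have hnear : ∀ p : ℕ, p ≤ 2 ^ (j + 1) → ∀ x : unitInterval, (x : ℝ) = p / 2 ^ (j + 1) →
      |u (N p) - ω.1 x| ≤ η := by
    intro p hp x hx
    refine abs_sub_le_of_mem_holderBall hβ hK hω hn ?_
    have h1 : (N p : ℝ) * 2 ^ (j + 1) ≤ n * p := by
      exact_mod_cast Nat.div_mul_le_self (n * p) (2 ^ (j + 1))
    have h2 : (n : ℝ) * p ≤ (N p + 1) * 2 ^ (j + 1) := by
      have := Nat.lt_mul_of_div_lt (Nat.lt_succ_self (n * p / 2 ^ (j + 1))) (Nat.two_pow_pos (j + 1))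
      exact_mod_cast this.le
    rw [coe_gridPt ((hNmono hp).trans_eq hNtop), hx, abs_sub_comm]
    have h3 : (p : ℝ) / 2 ^ (j + 1) - (N p : ℝ) / n =
        (n * p - N p * 2 ^ (j + 1)) / 2 ^ (j + 1) * (n : ℝ)⁻¹ := by field_simp
    have h4 : 0 ≤ ((n : ℝ) * p - N p * 2 ^ (j + 1)) / 2 ^ (j + 1) :=
      div_nonneg (by linarith) (by positivity)
    rw [h3, abs_of_nonneg (mul_nonneg h4 (by positivity))]
    refine mul_le_of_le_one_left (by positivity) ?_
    rw [div_le_one (by positivity)]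
    linarith
  have hblock : ∀ k < 2 ^ j, a ≤ V (N (2 * (k + 1))) - V (N (2 * k)) := by
    intro k hk
    have hk2 : 2 * k + 2 ≤ 2 ^ (j + 1) := by rw [pow_succ]; omega
    have h1 := abs_le.1 <| hnear (2 * k + 1) (by omega) (gridPt (2 ^ (j + 1)) (2 * k + 1)) (by
      rw [coe_gridPt (by omega)]; push_cast; rfl)
    have h2 := abs_le.1 <| hnear (2 * k) (by omega) (gridPt (2 ^ j) k) (by
      rw [coe_gridPt hk.le]; push_cast; rw [pow_succ]; field_simp)
    have h3 := abs_le.1 <| hnear (2 * (k + 1)) (by omega) (gridPt (2 ^ j) (k + 1)) (by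
      rw [coe_gridPt hk]; push_cast; rw [pow_succ]; field_simp)
    have h4 := abs_le.1 <|
      abs_sub_le_sum_sub_sum u (hNmono (show 2 * k ≤ 2 * k + 1 by omega))
    have h5 := abs_le.1 <|
      abs_sub_le_sum_sub_sum u (hNmono (show 2 * k + 1 ≤ 2 * (k + 1) by omega))
    have h6 := ha k hk
    rw [secDiff] at h6
    rcases le_abs'.1 h6 with h6 | h6 <;>
      linarith [h1.1, h1.2, h2.1, h2.2, h3.1, h3.2, h4.1, h4.2, h5.1, h5.2]
  calc 2 ^ j * a = ∑ k ∈ Finset.range (2 ^ j), a := by simp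
    _ ≤ ∑ k ∈ Finset.range (2 ^ j), (V (N (2 * (k + 1))) - V (N (2 * k))) :=
        Finset.sum_le_sum fun k hk => hblock k (Finset.mem_range.1 hk)
    _ = V n := by
        rw [Finset.sum_range_sub (fun k => V (N (2 * k))), ← pow_succ', hNtop]
        simp [hN, hV]
    _ ≤ _ := sum_abs_increment_le ω hn

lemma eventually_mul_rpow_le {C p q : ℝ} (hpq : p < q) :
    ∀ᶠ n : ℕ in atTop, C * (n : ℝ) ^ p ≤ (n : ℝ) ^ q := by
  have h1 : Tendsto (fun n : ℕ => (n : ℝ) ^ (q - p)) atTop atTop :=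
    (tendsto_rpow_atTop (sub_pos.2 hpq)).comp tendsto_natCast_atTop_atTop
  filter_upwards [h1.eventually_ge_atTop C, eventually_gt_atTop 0] with n hn hn0
  have hn0 : (0 : ℝ) < n := by exact_mod_cast hn0
  calc C * (n : ℝ) ^ p ≤ (n : ℝ) ^ (q - p) * (n : ℝ) ^ p := by gcongr
    _ = _ := by rw [← Real.rpow_add hn0, sub_add_cancel]

lemma eventually_Qvar_signPath_le {α β : ℝ} (hα : 0 < α) (hα1 : α < 1) (hβα : β < α)
    (s : ℕ → ℕ → Bool) : ∀ᶠ n : ℕ in atTop, Qvar (signPath α hα s) n ≤ (n : ℝ) ^ (-β) := by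
  obtain ⟨γ, hγ1, hγ2⟩ := exists_between (max_lt hα hβα)
  have hγ0 := (le_max_left _ _).trans_lt hγ1
  have hγβ := (le_max_right _ _).trans_lt hγ1
  have hq : (2 : ℝ) ^ (γ - α) < 1 :=
    Real.rpow_lt_one_of_one_lt_of_neg (by norm_num) (by linarith)
  filter_upwards [eventually_mul_rpow_le (C := 2 / (1 - 2 ^ (γ - α))) (neg_lt_neg hγβ),
    eventually_gt_atTop 0] with n hn hn0
  exact (Qvar_le_of_mem_holderBall hγ0 (div_nonneg (by norm_num) (by linarith))
    (signPath_mem_holderBall hγ0 hγ2 (by linarith) s) hn0).trans hn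

lemma eventually_le_Qvar_signPath {α t : ℝ} (hα : 0 < α) (hα1 : α < 1) (ht : α < t)
    (s : ℕ → ℕ → Bool) : ∀ᶠ n : ℕ in atTop, (n : ℝ) ^ (-t) ≤ Qvar (signPath α hα s) n := by
  obtain ⟨ρ, hρ1, hρ2⟩ := exists_between (show max 0 ((1 - t) / (1 - α)) < 1 from
    max_lt one_pos (by rw [div_lt_one (by linarith)]; linarith))
  have hρ0 := (le_max_left _ _).trans_lt hρ1
  have hρt : 1 - t < ρ * (1 - α) := by
    rw [← div_lt_iff₀ (by linarith)]; exact (le_max_right _ _).trans_lt hρ1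
  obtain ⟨β, hβ1, hβ2⟩ := exists_between (show ρ * α < α by nlinarith)
  have hβ0 : 0 < β := lt_trans (by positivity) hβ1
  have hq : (2 : ℝ) ^ (β - α) < 1 :=
    Real.rpow_lt_one_of_one_lt_of_neg (by norm_num) (by linarith)
  set K := 2 / (1 - (2 : ℝ) ^ (β - α)) with hK
  have hK0 : 0 ≤ K := div_nonneg (by norm_num) (by linarith)
  filter_upwards [eventually_mul_rpow_le (C := 4 * K) (neg_lt_neg hβ1),
    eventually_mul_rpow_le (C := 2) hρt, eventually_gt_atTop 0] with n hn1 hn2 hn0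
  have hn0' : (0 : ℝ) < n := by exact_mod_cast hn0
  have hn1' : (1 : ℝ) ≤ n := by exact_mod_cast hn0
  obtain ⟨j, hj1, hj2⟩ := exists_nat_pow_near (Real.one_le_rpow hn1' hρ0.le) one_lt_two
  have hp : (0 : ℝ) < 2 ^ j := by positivity
  have ha : (n : ℝ) ^ (-(ρ * α)) ≤ ((2 : ℝ) ^ j) ^ (-α) := by
    rw [neg_mul_eq_mul_neg, Real.rpow_mul hn0'.le]
    exact Real.rpow_le_rpow_of_nonpos hp hj1 (by linarith)
  have h1 := two_pow_mul_le_of_le_abs_secDiff (a := ((2 : ℝ) ^ j) ^ (-α)) hβ0 hK0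
    (signPath_mem_holderBall hβ0 hβ2 (by linarith) s) hn0 (j := j) (fun k hk => by
      rw [secDiff_signPath _ s hk, abs_mul, abs_boolSign, one_mul, abs_of_pos (by positivity)])
    (by rw [← mul_assoc]; exact hn1.trans ha)
  have h2 : (n : ℝ) ^ (ρ * (1 - α)) ≤ 2 * (2 ^ j * ((2 : ℝ) ^ j) ^ (-α)) := by
    have h3 : (2 : ℝ) ^ j * ((2 : ℝ) ^ j) ^ (-α) = ((2 : ℝ) ^ j) ^ (1 - α) := by
      rw [sub_eq_add_neg, Real.rpow_add hp, Real.rpow_one]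
    calc (n : ℝ) ^ (ρ * (1 - α)) = ((n : ℝ) ^ ρ) ^ (1 - α) := Real.rpow_mul hn0'.le _ _
      _ ≤ ((2 : ℝ) ^ (j + 1)) ^ (1 - α) :=
          Real.rpow_le_rpow (by positivity) hj2.le (by linarith)
      _ = (2 : ℝ) ^ (1 - α) * ((2 : ℝ) ^ j) ^ (1 - α) := by
          rw [pow_succ', Real.mul_rpow (by norm_num) hp.le]
      _ ≤ _ := by
          rw [h3]
          gcongr
          simpa using Real.rpow_le_rpow_of_exponent_le one_le_two (show 1 - α ≤ 1 by linarith)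
  have h4 : (n : ℝ) ^ (1 - t) ≤ n * Qvar (signPath α hα s) n := by linarith
  rw [sub_eq_add_neg, Real.rpow_add hn0', Real.rpow_one] at h4
  exact le_of_mul_le_mul_left h4 hn0'

lemma signPath_mem_holderCrit {α : ℝ} (hα : 0 < α) (hα1 : α < 1) (s : ℕ → ℕ → Bool) :
    signPath α hα s ∈ holderCrit α := by
  have hlim : Tendsto (fun n : ℕ => -Real.log (Qvar (signPath α hα s) n) / Real.log n) atTop
      (𝓝 α) := by
    have hlog : ∀ᶠ n : ℕ in atTop, 0 < Real.log n ∧ (0 : ℝ) < n := by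
      filter_upwards [eventually_gt_atTop 1] with n hn
      have : (1 : ℝ) < n := by exact_mod_cast hn
      exact ⟨Real.log_pos this, by linarith⟩
    rw [tendsto_order]
    constructor
    · intro b hb
      obtain ⟨β, h1, h2⟩ := exists_between hb
      filter_upwards [eventually_Qvar_signPath_le hα hα1 h2 s,
        eventually_le_Qvar_signPath hα hα1 (lt_add_one α) s, hlog] with n hn hn' ⟨hl, hn0⟩
      have hQ : 0 < Qvar (signPath α hα s) n := lt_of_lt_of_le (by positivity) hn'
      have := Real.log_le_log hQ hn
      rw [Real.log_rpow hn0] at this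
      rw [lt_div_iff₀ hl]
      nlinarith
    · intro b hb
      obtain ⟨t, h1, h2⟩ := exists_between hb
      filter_upwards [eventually_le_Qvar_signPath hα hα1 h1 s, hlog] with n hn ⟨hl, hn0⟩
      have := Real.log_le_log (by positivity) hn
      rw [Real.log_rpow hn0] at this
      rw [div_lt_iff₀ hl]
      nlinarith
  have hlim' := (EReal.tendsto_coe.2 hlim)
  refine ⟨mem_iInter₂.2 fun b hb => ⟨_, signPath_mem_holderBall hb.1 hb.2 ?_ s⟩,
    hlim'.liminf_eq, hlim'.limsup_eq⟩
  linarith [hb.2]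

/-! ### Lower bound for the Hausdorff order -/

/-- The mass distribution principle for the push-forward of a probability measure. -/
lemma hMeas_eq_top_of_measure_preimage_ball_le {X Y : Type*} [MetricSpace X] [MeasurableSpace Y]
    (μ : Measure Y) [IsProbabilityMeasure μ] {F : Y → X} {A : Set X} (hF : ∀ y, F y ∈ A)
    {h : ℝ → ℝ} (hμ : ∀ M : ℕ, ∃ δ > 0, ∀ r, 0 < r → r ≤ δ → ∀ c,
      M * μ (F ⁻¹' Metric.ball c r) ≤ ENNReal.ofReal (h r)) :
    hMeas h A = ∞ := by
  refine ENNReal.eq_top_of_forall_nnreal_le fun m => ?_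
  obtain ⟨M, hM⟩ := exists_nat_ge m
  obtain ⟨δ, hδ, hr⟩ := hμ M
  refine le_trans (by exact_mod_cast hM : (m : ℝ≥0∞) ≤ M) ?_
  refine le_iSup₂_of_le (ENNReal.ofReal δ) (ENNReal.ofReal_pos.2 hδ) ?_
  refine le_iInf₂ fun c r => le_iInf₂ fun hrδ hcov => ?_
  calc (M : ℝ≥0∞) = M * μ univ := by rw [measure_univ, mul_one]
    _ ≤ M * ∑' n, μ (F ⁻¹' Metric.ball (c n) (r n)) := by
        gcongr
        refine (measure_mono fun y _ => ?_).trans (measure_iUnion_le _)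
        rw [← preimage_iUnion]
        exact hcov (hF y)
    _ = ∑' n, M * μ (F ⁻¹' Metric.ball (c n) (r n)) := ENNReal.tsum_mul_left.symm
    _ ≤ _ := ENNReal.tsum_le_tsum fun n =>
        hr _ (hrδ n).1 ((ENNReal.ofReal_le_ofReal_iff hδ.le).1 (hrδ n).2) _

/-- The path in `C_α^crit` whose Faber-Schauder coefficients have the signs of those of `ω`. -/
def critOfSigns (α : ℝ) (hα : 0 < α) (ω : PathSpace) : PathSpace :=
  signPath α hα fun j k => decide (0 ≤ secDiff ω.1 j k)

lemma IsWienerMeasure.measure_critOfSigns_le {W : Measure PathSpace} (hW : IsWienerMeasure W)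
    {α : ℝ} (hα : 0 < α) (c : PathSpace) {r : ℝ} {j : ℕ} (hr : 2 * r < ((2 : ℝ) ^ j) ^ (-α)) :
    W (critOfSigns α hα ⁻¹' Metric.ball c r) ≤ ENNReal.ofReal ((1 / 2) ^ 2 ^ j) := by
  set A : CoefIdx → Set ℝ := fun o => if 0 ≤ coef c o then Ici 0 else Iio 0 with hA
  calc W (critOfSigns α hα ⁻¹' Metric.ball c r)
      ≤ W {ω | ∀ o ∈ dyIdx j (j + 1), coef ω o ∈ A o} := by
        refine measure_mono fun ω hω o ho => ?_
        obtain ⟨j', k, h1, h2, hk, rfl⟩ := mem_dyIdx.1 ho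
        obtain rfl : j' = j := by omega
        have h3 := abs_secDiff_sub_le (fun t => (abs_sub_lt_of_mem_ball hω t).le) j' k
        rw [critOfSigns, secDiff_signPath hα _ hk] at h3
        have hp : (0 : ℝ) < ((2 : ℝ) ^ j') ^ (-α) := by positivity
        rw [abs_le] at h3
        simp only [hA]
        by_cases hs : 0 ≤ secDiff ω.1 j' k
        · simp only [hs, decide_true, boolSign, if_true, one_mul] at h3
          rw [if_pos (show 0 ≤ coef c (some (j', k)) by rw [coef]; linarith [h3.2])]
          exact hs
        · simp only [hs, decide_false, boolSign, Bool.false_eq_true, if_false, neg_mul,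
            one_mul] at h3
          rw [if_neg (show ¬ 0 ≤ coef c (some (j', k)) by rw [coef]; linarith [h3.1])]
          exact not_le.1 hs
    _ = ∏ o ∈ dyIdx j (j + 1), ProbabilityTheory.gaussianReal 0 (coefVar o) (A o) :=
        hW.measure_coef _ (fun o ho => valid_of_mem_dyIdx ho) A fun o => by
          simp only [hA]; split_ifs <;> measurability
    _ = ∏ o ∈ dyIdx j (j + 1), (1 / 2 : ℝ≥0∞) := by
        refine Finset.prod_congr rfl fun o _ => ?_
        simp only [hA]
        split_ifs
        · exact (gaussianReal_Ici_zero (coefVar_ne_zero o)).1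
        · exact (gaussianReal_Ici_zero (coefVar_ne_zero o)).2
    _ = ENNReal.ofReal ((1 / 2) ^ 2 ^ j) := by
        rw [Finset.prod_const, card_dyIdx_succ, ENNReal.ofReal_pow (by norm_num)]
        congr 1
        rw [ENNReal.ofReal_div_of_pos (by norm_num)]
        simp

lemma IsWienerMeasure.measure_critOfSigns_le_exp {W : Measure PathSpace} (hW : IsWienerMeasure W)
    {α : ℝ} (hα : 0 < α) (c : PathSpace) {r : ℝ} (hr0 : 0 < r) (hr : 4 * r ≤ 1) :
    W (critOfSigns α hα ⁻¹' Metric.ball c r) ≤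
      ENNReal.ofReal (Real.exp (-(Real.log 2 / 2 * (4 * r) ^ (-α⁻¹)))) := by
  have h4 : 0 < 4 * r := by positivity
  obtain ⟨j, hj1, hj2⟩ := exists_nat_pow_near
    (Real.one_le_rpow_of_pos_of_le_one_of_nonpos h4 hr (neg_nonpos.2 (inv_pos.2 hα).le))
    one_lt_two
  have h1 : 4 * r ≤ ((2 : ℝ) ^ j) ^ (-α) := by
    calc 4 * r = ((4 * r) ^ (-α⁻¹)) ^ (-α) := by
          rw [← Real.rpow_mul h4.le, neg_mul_neg, inv_mul_cancel₀ hα.ne', Real.rpow_one]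
      _ ≤ _ := Real.rpow_le_rpow_of_nonpos (by positivity) hj1 (by linarith)
  refine (hW.measure_critOfSigns_le hα c (j := j) (by linarith)).trans
    (ENNReal.ofReal_le_ofReal ?_)
  rw [half_pow_eq_exp, Real.exp_le_exp, neg_le_neg_iff]
  push_cast
  rw [pow_succ] at hj2
  have := Real.log_pos one_lt_two
  nlinarith

lemma exists_mul_exp_neg_rpow_le {a p q : ℝ} (ha : 0 < a) (hq : 0 < q) (hqp : q < p) (M : ℕ) :
    ∃ δ > 0, ∀ r, 0 < r → r ≤ δ →
      M * Real.exp (-(a * r ^ (-p))) ≤ Real.exp (-(r ^ (-q))) := by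
  have hp : 0 < p := hq.trans hqp
  have h1 : ∀ᶠ x : ℝ in atTop, x ^ q ≤ a / 2 * x ^ p ∧ M ≤ Real.exp (a / 2 * x ^ p) := by
    refine Eventually.and ?_ ?_
    · filter_upwards [(tendsto_rpow_atTop (sub_pos.2 hqp)).eventually_ge_atTop (2 / a),
        eventually_gt_atTop 0] with x hx hx0
      calc x ^ q = a / 2 * (2 / a * x ^ q) := by field_simp
        _ ≤ a / 2 * (x ^ (p - q) * x ^ q) := by gcongr
        _ = _ := by rw [← Real.rpow_add hx0, sub_add_cancel]
    · exact (Real.tendsto_exp_atTop.comp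
        ((tendsto_rpow_atTop hp).const_mul_atTop (half_pos ha))).eventually_ge_atTop _
  obtain ⟨x₀, hx₀⟩ := eventually_atTop.1 h1
  refine ⟨(max x₀ 1)⁻¹, by positivity, fun r hr0 hr => ?_⟩
  have hx : x₀ ≤ r⁻¹ := (le_max_left _ _).trans ((le_inv_comm₀ hr0 (by positivity)).1 hr)
  obtain ⟨h2, h3⟩ := hx₀ _ hx
  rw [Real.inv_rpow hr0.le, Real.inv_rpow hr0.le, ← Real.rpow_neg hr0.le] at h2
  rw [Real.inv_rpow hr0.le, ← Real.rpow_neg hr0.le] at h3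
  rw [← Real.rpow_neg hr0.le] at h2
  calc M * Real.exp (-(a * r ^ (-p))) ≤
        Real.exp (a / 2 * r ^ (-p)) * Real.exp (-(a * r ^ (-p))) := by gcongr
    _ = Real.exp (-(a / 2 * r ^ (-p))) := by rw [← Real.exp_add]; ring_nf
    _ ≤ _ := by gcongr

lemma IsWienerMeasure.le_ordH_holderCrit {W : Measure PathSpace} (hW : IsWienerMeasure W)
    {α : ℝ} (hα : 0 < α) (hα1 : α < 1) : ENNReal.ofReal α⁻¹ ≤ ordH (holderCrit α) := by
  have := hW.1
  have hα' : 0 < α⁻¹ := inv_pos.2 hα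
  refine le_of_forall_lt fun b hb => ?_
  obtain ⟨γ, hγ, hγα⟩ := ENNReal.lt_iff_exists_nnreal_btwn.1 hb
  have hγ0 : (0 : ℝ) < γ := by
    exact_mod_cast (zero_le : 0 ≤ b).trans_lt hγ
  have hγα' : (γ : ℝ) < α⁻¹ := by
    rw [← ENNReal.ofReal_coe_nnreal] at hγα
    exact (ENNReal.ofReal_lt_ofReal_iff hα').1 hγα
  refine hγ.trans_le (le_iSup₂_of_le (γ : ℝ) ⟨hγ0, ?_⟩ (by simp))
  refine hMeas_eq_top_of_measure_preimage_ball_le W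
    (fun ω => signPath_mem_holderCrit hα hα1 fun j k => decide (0 ≤ secDiff ω.1 j k))
    fun M => ?_
  obtain ⟨δ, hδ, h⟩ := exists_mul_exp_neg_rpow_le
    (a := Real.log 2 / 2 * 4 ^ (-α⁻¹)) (by positivity) hγ0 hγα' M
  refine ⟨min δ (1 / 4), by positivity, fun r hr0 hr c => ?_⟩
  refine le_trans ?_ (ENNReal.ofReal_le_ofReal (h r hr0 (hr.trans (min_le_left _ _))))
  rw [ENNReal.ofReal_mul (by positivity), ENNReal.ofReal_natCast, mul_assoc,
    ← Real.mul_rpow (by norm_num) hr0.le]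
  gcongr
  exact hW.measure_critOfSigns_le_exp hα c hr0 (by linarith [hr.trans (min_le_right _ _)])

/-- **Local order of the Wiener measure.** For `α ∈ (0,1/2)`: at every
`ω̄ ∈ C_α^crit` the local order of `W` exists and equals `2(α⁻¹ - 1)`;
`ord_H C_α^crit = α⁻¹`; and the minimum of the lower local order of `W` over
`Ω` equals `2`. -/
theorem wiener_local_order_crit (W : Measure PathSpace) (hW : IsWienerMeasure W)
    (α : ℝ) (hα : α ∈ Set.Ioo (0:ℝ) (1/2)) :
    (∀ ωb ∈ holderCrit α,
      lowerLocOrd W ωb = ((2 * (α⁻¹ - 1) : ℝ) : EReal) ∧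
      upperLocOrd W ωb = ((2 * (α⁻¹ - 1) : ℝ) : EReal)) ∧
    ordH (holderCrit α) = ENNReal.ofReal α⁻¹ ∧
    IsLeast (Set.range (lowerLocOrd W)) (2 : EReal) := by
  exact ⟨fun ωb h => hW.locOrd_of_mem_holderCrit hα h,
    le_antisymm (ordH_holderCrit_le hα.1 (by linarith [hα.2]))
      (hW.le_ordH_holderCrit hα.1 (by linarith [hα.2])),
    hW.isLeast_range_lowerLocOrd⟩

end Multifractal
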